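/- arXiv:math/0309360 — 3 statements merged into one kernel-verified Lean document; each statement's English description precedes it below -/
import Mathlib

section
/- Let R be a finite-dimensional locally essential integral domain, written R = ⋂_{p∈Δ} R_p with each R_p a valuation domain. Then dim(Int(R)) ≤ dim(R[X]). -/
/- Preamble: integer-valued polynomials and essential domains. -/

noncomputable section

open Polynomial

/-- The image in the quotient field `FractionRing R` of the localization `R_p` of `R`
at (the complement of) an ideal `p`, as a subset of `FractionRing R`. -/
def locSet (R : Type*) [CommRing R] [IsDomain R] (p : Ideal R) : Set (FractionRing R) :=
  {x | ∃ a s : R, s ∉ p ∧ x = algebraMap R (FractionRing R) a / algebraMap R (FractionRing R) s}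

/-- An integral domain `R` is *essential* if there is a set `Δ` of prime ideals of `R`
such that `R = ⋂_{p ∈ Δ} R_p` (inside the quotient field) and each `R_p` is a valuation
domain (equivalently, for every `x` in the quotient field, `x ∈ R_p` or `x⁻¹ ∈ R_p`). -/
def IsEssential (R : Type*) [CommRing R] [IsDomain R] : Prop :=
  ∃ Δ : Set (Ideal R),
    (∀ p ∈ Δ, p.IsPrime) ∧
    (∀ p ∈ Δ, ∀ x : FractionRing R, x ∈ locSet R p ∨ x⁻¹ ∈ locSet R p) ∧
    Set.range (algebraMap R (FractionRing R)) = ⋂ p ∈ Δ, locSet R p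

/-- An integral domain `R` is *locally essential* if `R_q` is an essential domain for
every prime ideal `q` of `R`. -/
def IsLocallyEssential (R : Type*) [CommRing R] [IsDomain R] : Prop :=
  ∀ (q : Ideal R) (hq : q.IsPrime), IsEssential (Localization (@Ideal.primeCompl R _ q hq))

/-- The ring `Int(R) = {f ∈ K[X] : f(R) ⊆ R}` of integer-valued polynomials over `R`,
as a subring of `K[X]` where `K` is the quotient field of `R`. -/
def IntPoly (R : Type*) [CommRing R] [IsDomain R] : Subring (Polynomial (FractionRing R)) :=
  ⨅ a : R, Subring.comap (Polynomial.evalRingHom (algebraMap R (FractionRing R) a))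
    (algebraMap R (FractionRing R)).range

end

/-!
Let `P` be a prime of `Int(R)` and `m` a maximal ideal of `R` containing `P ∩ R`; it is enough to
bound the height of `P` by `dim R[X]`. Since `R_m` is essential, there are two cases.

* `R_m` is a valuation domain. For primes of an `R`-domain `A` lying below `m`, the transcendence
  degree of `κ(Q)` over `κ(Q ∩ R)` is antitone in `Q`, because a polynomial relation over a
  valuation ring can be divided by its content; it drops strictly along the fibres of
  `Spec A → Spec R`. So `ht P ≤ ht (P ∩ R) + trdeg_R A`, which is at most
  `dim R + 1 ≤ dim R[X]` for `A = Int(R)`.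
* `R_m` is an intersection of rings `R_p` with `p < m` prime. Such `p` have infinite residue rings
  `R / p`, so solving a Vandermonde system shows `Int(R) ⊆ R_p[X]`. Hence
  `R[X] ⊆ Int(R) ⊆ R_m[X]`, and contraction to `R[X]` does not decrease the height of `P`.
-/

section DenominatorIdeal

open Polynomial

variable {R A B : Type*} [CommRing R] [CommRing A] [Algebra R A] [CommRing B] [Algebra R B]

/-- The ideal `{r ∈ R | r x ∈ R}` of denominators of an element `x` of an `R`-algebra. When `R` is a
domain with quotient field `A` and `p` is a prime of `R`, one has `x ∈ R_p` if and only if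
`¬ denominatorIdeal R x ≤ p`. -/
def denominatorIdeal (R : Type*) [CommRing R] [Algebra R A] (x : A) : Ideal R :=
  (1 : Submodule R A).colon {x}

theorem mem_denominatorIdeal {x : A} {r : R} :
    r ∈ denominatorIdeal R x ↔ r • x ∈ (1 : Submodule R A) :=
  Submodule.mem_colon_singleton

theorem denominatorIdeal_map {φ : A →ₐ[R] B} (hφ : Function.Injective φ) (x : A) :
    denominatorIdeal R (φ x) = denominatorIdeal R x := by
  ext r
  simp only [mem_denominatorIdeal, ← map_smul, Submodule.mem_one, ← φ.commutes, hφ.eq_iff]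

theorem denominatorIdeal_le_under [Algebra A B] [IsScalarTower R A B] (x : B) :
    denominatorIdeal R x ≤ (denominatorIdeal A x).under R := by
  intro r hr
  obtain ⟨a, ha⟩ := Submodule.mem_one.1 (mem_denominatorIdeal.1 hr)
  rw [Ideal.mem_comap, mem_denominatorIdeal, algebraMap_smul, Submodule.mem_one, ← ha]
  exact ⟨algebraMap R A a, (IsScalarTower.algebraMap_apply R A B a).symm⟩

theorem not_denominatorIdeal_algebraMap_le [Algebra A B] [IsScalarTower R A B] (q : Ideal R)
    [q.IsPrime] [IsLocalization.AtPrime A q] (y : A) :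
    ¬ denominatorIdeal R (algebraMap A B y) ≤ q := by
  obtain ⟨⟨a, s⟩, has⟩ := IsLocalization.surj q.primeCompl y
  refine SetLike.not_le_iff_exists.2 ⟨(s : R), ?_, s.2⟩
  rw [mem_denominatorIdeal, Submodule.mem_one]
  refine ⟨a, ?_⟩
  rw [IsScalarTower.algebraMap_apply R A B, ← has, map_mul, mul_comm, Algebra.smul_def,
    IsScalarTower.algebraMap_apply R A B]

theorem exists_notMem_smul_eq_map {p : Ideal R} (hp : p.IsPrime) {f : A[X]}
    (hf : ∀ j, ¬ denominatorIdeal R (f.coeff j) ≤ p) :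
    ∃ s ∉ p, ∃ g : R[X], s • f = g.map (algebraMap R A) := by
  have hinf : ¬ f.support.inf (fun j => denominatorIdeal R (f.coeff j)) ≤ p := by
    rw [hp.inf_le']
    exact fun ⟨j, _, hj⟩ => hf j hj
  obtain ⟨s, hs, hsp⟩ := SetLike.not_le_iff_exists.1 hinf
  have hlifts : s • f ∈ lifts (algebraMap R A) := by
    rw [lifts_iff_coeff_lifts]
    intro j
    rw [coeff_smul]
    by_cases hj : j ∈ f.support
    · have hsj := Finset.inf_le (f := fun j => denominatorIdeal R (f.coeff j)) hj hs
      exact Submodule.mem_one.1 (mem_denominatorIdeal.1 hsj)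
    · exact ⟨0, by rw [notMem_support_iff.1 hj, map_zero, smul_zero]⟩
  obtain ⟨g, hg⟩ := (mem_lifts _).1 hlifts
  exact ⟨s, hsp, g, hg.symm⟩

end DenominatorIdeal

section Vandermonde

open Polynomial

variable {R A : Type*} [CommRing R] [CommRing A] [Algebra R A]

theorem det_vandermonde_smul_coeff_mem {n : ℕ} (v : Fin n → R) {f : A[X]} (hn : f.natDegree < n)
    (N : Submodule R A) (hN : ∀ i, f.eval (algebraMap R A (v i)) ∈ N) (j : ℕ) :
    (Matrix.vandermonde v).det • f.coeff j ∈ N := by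
  rcases le_or_gt n j with hnj | hjn
  · rw [coeff_eq_zero_of_natDegree_lt (hn.trans_le hnj), smul_zero]
    exact N.zero_mem
  set V := Matrix.vandermonde v
  have heval (i : Fin n) : f.eval (algebraMap R A (v i)) = ∑ k, V i k • f.coeff k := by
    rw [eval_eq_sum_range' hn, ← Fin.sum_univ_eq_sum_range fun k => f.coeff k * _ ^ k]
    simp only [V, Matrix.vandermonde_apply, Algebra.smul_def, map_pow, mul_comm]
  have cramer : V.det • f.coeff j =
      ∑ i, V.adjugate ⟨j, hjn⟩ i • f.eval (algebraMap R A (v i)) := calc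
    V.det • f.coeff j = ∑ k : Fin n, (V.adjugate * V) ⟨j, hjn⟩ k • f.coeff k := by
      simp [Matrix.adjugate_mul, Matrix.one_apply]
    _ = ∑ i, V.adjugate ⟨j, hjn⟩ i • f.eval (algebraMap R A (v i)) := by
      simp only [heval, Matrix.mul_apply, Finset.sum_smul, Finset.smul_sum, mul_smul]
      exact Finset.sum_comm
  rw [cramer]
  exact N.sum_mem fun i _ => N.smul_mem _ (hN i)

theorem not_denominatorIdeal_coeff_le {p : Ideal R} [p.IsPrime] [Infinite (R ⧸ p)] {f : A[X]}
    (hf : ∀ a : R, f.eval (algebraMap R A a) ∈ (1 : Submodule R A)) (j : ℕ) :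
    ¬ denominatorIdeal R (f.coeff j) ≤ p := by
  let x : Fin (f.natDegree + 1) ↪ R ⧸ p := Fin.valEmbedding.trans (Infinite.natEmbedding _)
  choose v hv using fun i => Ideal.Quotient.mk_surjective (x i)
  have hdet : (Matrix.vandermonde v).det ∉ p := by
    have hmap : (Ideal.Quotient.mk p).mapMatrix (Matrix.vandermonde v) = Matrix.vandermonde x := by
      ext i k
      simp [Matrix.vandermonde_apply, hv]
    rw [← Ideal.Quotient.eq_zero_iff_mem, RingHom.map_det, hmap]
    exact Matrix.det_vandermonde_ne_zero_iff.2 x.injective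
  exact fun hle => hdet (hle (mem_denominatorIdeal.2
    (det_vandermonde_smul_coeff_mem v (Nat.lt_succ_self _) 1 (fun i => hf (v i)) j)))

end Vandermonde

section Essential

theorem mem_locSet_iff {R : Type*} [CommRing R] [IsDomain R] {p : Ideal R} {x : FractionRing R} :
    x ∈ locSet R p ↔ ¬ denominatorIdeal R x ≤ p := by
  have hK {s : R} (hs : s ∉ p) : algebraMap R (FractionRing R) s ≠ 0 := by
    rw [Ne, FaithfulSMul.algebraMap_eq_zero_iff]
    exact fun h => hs (h ▸ p.zero_mem)
  rw [SetLike.not_le_iff_exists]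
  constructor
  · rintro ⟨a, s, hs, rfl⟩
    exact ⟨s, mem_denominatorIdeal.2 (Submodule.mem_one.2
      ⟨a, by rw [Algebra.smul_def, mul_div_cancel₀ _ (hK hs)]⟩), hs⟩
  · rintro ⟨s, hsx, hs⟩
    obtain ⟨a, ha⟩ := Submodule.mem_one.1 (mem_denominatorIdeal.1 hsx)
    exact ⟨a, s, hs, by rw [ha, Algebra.smul_def, mul_div_cancel_left₀ _ (hK hs)]⟩

theorem mem_range_of_mem_locSet_maximalIdeal {S : Type*} [CommRing S] [IsDomain S] [IsLocalRing S]
    {x : FractionRing S} (hx : x ∈ locSet S (IsLocalRing.maximalIdeal S)) :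
    x ∈ Set.range (algebraMap S (FractionRing S)) := by
  obtain ⟨a, s, hs, rfl⟩ := hx
  obtain ⟨u, rfl⟩ := IsLocalRing.notMem_maximalIdeal.1 hs
  refine ⟨a * ↑u⁻¹, ?_⟩
  rw [eq_div_iff (u.isUnit.map (algebraMap S (FractionRing S))).ne_zero, ← map_mul, mul_assoc,
    Units.inv_mul, mul_one]

theorem IsEssential.valuationRing_or_mem_range {S : Type*} [CommRing S] [IsDomain S] [IsLocalRing S]
    (h : IsEssential S) :
    ValuationRing S ∨ ∀ x : FractionRing S,
      (∀ p : Ideal S, p.IsPrime → p ≠ IsLocalRing.maximalIdeal S → x ∈ locSet S p) →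
        x ∈ Set.range (algebraMap S (FractionRing S)) := by
  obtain ⟨Δ, hprime, hval, hinter⟩ := h
  by_cases hmax : IsLocalRing.maximalIdeal S ∈ Δ
  · left
    rw [ValuationRing.iff_isInteger_or_isInteger S (FractionRing S)]
    exact fun x => (hval _ hmax x).imp mem_range_of_mem_locSet_maximalIdeal
      mem_range_of_mem_locSet_maximalIdeal
  · right
    intro x hx
    rw [hinter]
    exact Set.mem_iInter₂.2 fun p hp => hx p (hprime p hp) fun heq => hmax (heq ▸ hp)

theorem valuationRing_or_not_denominatorIdeal_le {R S K : Type*} [CommRing R] [IsDomain R]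
    [CommRing S] [IsDomain S] [Algebra R S] [Field K] [Algebra R K] [IsFractionRing R K]
    (q : Ideal R) [q.IsPrime] [IsLocalization.AtPrime S q] (h : IsEssential S) :
    ValuationRing S ∨ ∀ x : K,
      (∀ p : Ideal R, p.IsPrime → p < q → ¬ denominatorIdeal R x ≤ p) →
        ¬ denominatorIdeal R x ≤ q := by
  have : IsLocalRing S := IsLocalization.AtPrime.isLocalRing S q
  have hinj : Function.Injective (algebraMap R (FractionRing S)) := by
    rw [IsScalarTower.algebraMap_eq R S (FractionRing S)]
    exact (IsFractionRing.injective S (FractionRing S)).comp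
      (IsLocalization.injective S q.primeCompl_le_nonZeroDivisors)
  let φ : K →ₐ[R] FractionRing S :=
    IsFractionRing.liftAlgHom (g := Algebra.ofId R (FractionRing S)) hinj
  have hφ (x : K) : denominatorIdeal R (φ x) = denominatorIdeal R x :=
    denominatorIdeal_map φ.toRingHom.injective x
  refine h.valuationRing_or_mem_range.imp_right fun hmem x hx => ?_
  have hlocSet (p : Ideal S) (hp : p.IsPrime) (hne : p ≠ IsLocalRing.maximalIdeal S) :
      φ x ∈ locSet S p := by
    have hle : p.under R ≤ q :=
      (Ideal.comap_mono (IsLocalRing.le_maximalIdeal hp.ne_top)).trans_eq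
        (IsLocalization.AtPrime.under_maximalIdeal S q)
    have hlt : p.under R < q := lt_of_le_of_ne hle fun heq => hne <| by
      rw [← IsLocalization.map_under q.primeCompl S p, heq,
        IsLocalization.AtPrime.map_eq_maximalIdeal q S]
    rw [mem_locSet_iff]
    intro hden
    apply hx _ inferInstance hlt
    rw [← hφ]
    exact (denominatorIdeal_le_under _).trans (Ideal.comap_mono hden)
  obtain ⟨y, hy⟩ := hmem (φ x) hlocSet
  rw [← hφ, ← hy]
  exact not_denominatorIdeal_algebraMap_le q y

end Essential

section TranscendenceDegree

universe u

variable {k A B : Type*} [CommRing k] [CommRing A] [CommRing B] [Algebra k A] [Algebra k B]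
  {φ : A →ₐ[k] B}

theorem algebraicIndependent_option_of_map_eq_zero [IsDomain A] {ι : Type*} {x : ι → A}
    (hx : AlgebraicIndependent k (φ ∘ x)) {w : A} (hw : φ w = 0) (hw0 : w ≠ 0) :
    AlgebraicIndependent k (fun o : Option ι => o.elim w x) := by
  rw [(hx.of_comp φ).option_iff_transcendental]
  intro hw_alg
  obtain ⟨b, hb0, c, hc⟩ := hw_alg.exists_nonzero_dvd (mem_nonZeroDivisors_of_ne_zero hw0)
  have hb : (b : A) ∈ (MvPolynomial.aeval x).range :=
    (Algebra.adjoin_range_eq_range_aeval k x).le b.2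
  obtain ⟨F, hF⟩ := hb
  have hφF : MvPolynomial.aeval (φ ∘ x) F = 0 := calc
    MvPolynomial.aeval (φ ∘ x) F = φ (MvPolynomial.aeval x F) :=
      (MvPolynomial.comp_aeval_apply x φ F).symm
    _ = φ (w * c) := congrArg φ (hF.trans hc)
    _ = 0 := by rw [map_mul, hw, zero_mul]
  rw [hx.eq_zero_of_aeval_eq_zero F hφF, map_zero] at hF
  exact hb0 (Subtype.ext hF.symm)

theorem trdeg_add_one_le {A B : Type u} [CommRing A] [IsDomain A] [CommRing B] [IsDomain B]
    [Algebra k A] [Algebra k B] [FaithfulSMul k B] {φ : A →ₐ[k] B}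
    (hφ : Function.Surjective φ) (hinj : ¬ Function.Injective φ) :
    Algebra.trdeg k B + 1 ≤ Algebra.trdeg k A := by
  have : Nontrivial k := (algebraMap k B).domain_nontrivial
  obtain ⟨ι, y, hy⟩ := exists_isTranscendenceBasis' k B
  obtain ⟨x, rfl⟩ := hφ.comp_left y
  obtain ⟨w, hw, hw0⟩ : ∃ w, φ w = 0 ∧ w ≠ 0 := by
    simpa [injective_iff_map_eq_zero] using hinj
  rw [← hy.cardinalMk_eq_trdeg, ← Cardinal.mk_option]
  exact (algebraicIndependent_option_of_map_eq_zero hy.1 hw hw0).cardinalMk_le_trdeg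

end TranscendenceDegree

section ResidueTrdeg

variable {R A : Type*} [CommRing R] [CommRing A] [Algebra R A]

/-- The transcendence degree of the residue field extension `κ(Q) / κ(Q ∩ R)` at a prime `Q`,
computed on the quotient domains, whose fraction fields are the residue fields. -/
noncomputable def residueTrdeg (R : Type*) [CommRing R] [Algebra R A] (Q : Ideal A) : Cardinal :=
  Algebra.trdeg (R ⧸ Q.under R) (A ⧸ Q)

theorem residueTrdeg_eq (p : Ideal R) (Q : Ideal A) [Q.LiesOver p] :
    residueTrdeg R Q = Algebra.trdeg (R ⧸ p) (A ⧸ Q) := by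
  obtain rfl := Q.over_def p
  rfl

theorem residueTrdeg_add_one_le {Q Q' : Ideal A} [Q.IsPrime] [Q'.IsPrime] (hlt : Q < Q')
    (h : Q.under R = Q'.under R) : residueTrdeg R Q' + 1 ≤ residueTrdeg R Q := by
  have : Q'.LiesOver (Q.under R) := ⟨h⟩
  rw [residueTrdeg_eq (Q.under R) Q, residueTrdeg_eq (Q.under R) Q']
  let φ : A ⧸ Q →ₐ[R ⧸ Q.under R] A ⧸ Q' :=
    { Ideal.Quotient.factor hlt.le with
      commutes' := by rintro ⟨r⟩; rfl }
  refine trdeg_add_one_le (φ := φ) (Ideal.Quotient.factor_surjective hlt.le) fun hinj => ?_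
  obtain ⟨a, ha', ha⟩ := SetLike.exists_of_lt hlt
  apply ha
  rw [← Ideal.Quotient.eq_zero_iff_mem] at ha' ⊢
  exact hinj (ha'.trans (map_zero φ).symm)

theorem algebraicIndependent_mk_comp_iff {ι : Type*} {Q : Ideal A} {x : ι → A} :
    AlgebraicIndependent (R ⧸ Q.under R) (Ideal.Quotient.mk Q ∘ x) ↔
      ∀ F : MvPolynomial ι R, MvPolynomial.aeval x F ∈ Q → ∀ m, F.coeff m ∈ Q.under R := by
  have haeval (F : MvPolynomial ι R) :
      MvPolynomial.aeval (Ideal.Quotient.mk Q ∘ x) (F.map (Ideal.Quotient.mk (Q.under R))) =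
        Ideal.Quotient.mk Q (MvPolynomial.aeval x F) := by
    rw [MvPolynomial.aeval_def, MvPolynomial.aeval_def, MvPolynomial.eval₂_map,
      MvPolynomial.hom_eval₂]
    rfl
  rw [algebraicIndependent_iff,
    (MvPolynomial.map_surjective _ Ideal.Quotient.mk_surjective).forall]
  simp only [haeval, Ideal.Quotient.eq_zero_iff_mem, MvPolynomial.ext_iff, MvPolynomial.coeff_map,
    MvPolynomial.coeff_zero]

theorem residueTrdeg_bot_le [IsDomain A] [FaithfulSMul R A] :
    residueTrdeg R (⊥ : Ideal A) ≤ Algebra.trdeg R A := by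
  have : IsDomain R := (FaithfulSMul.algebraMap_injective R A).isDomain
  obtain ⟨ι, y, hy⟩ :=
    exists_isTranscendenceBasis' (R ⧸ (⊥ : Ideal A).under R) (A ⧸ (⊥ : Ideal A))
  obtain ⟨x, rfl⟩ := Ideal.Quotient.mk_surjective.comp_left y
  rw [residueTrdeg, ← hy.cardinalMk_eq_trdeg]
  have hx : AlgebraicIndependent R x := by
    refine algebraicIndependent_iff.2 fun F hF => ?_
    ext m
    have hm := algebraicIndependent_mk_comp_iff.1 hy.1 F hF m
    rwa [Ideal.under_bot] at hm
  exact hx.cardinalMk_le_trdeg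

end ResidueTrdeg

section ValuationRing

variable {R S : Type*} [CommRing R] [CommRing S] [IsDomain S] [ValuationRing S]

theorem exists_coeff_dvd {ι : Type*} {F : MvPolynomial ι S} (hF : F ≠ 0) :
    ∃ m, F.coeff m ≠ 0 ∧ ∀ n, F.coeff m ∣ F.coeff n := by
  have hdir : Directed (fun a b : S => b ∣ a) fun m : F.support => F.coeff m := fun m n =>
    (ValuationRing.dvd_total (F.coeff m) (F.coeff n)).elim
      (fun h => ⟨m, dvd_rfl, h⟩) (fun h => ⟨n, h, dvd_rfl⟩)
  have : Nonempty F.support :=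
    Finset.nonempty_coe_sort.2 (MvPolynomial.support_nonempty.2 hF)
  obtain ⟨m, hm⟩ := hdir.finite_le id
  refine ⟨m, MvPolynomial.mem_support_iff.1 m.2, fun n => ?_⟩
  by_cases hn : n ∈ F.support
  · exact hm ⟨n, hn⟩
  · rw [MvPolynomial.notMem_support_iff.1 hn]
    exact dvd_zero _

open MvPolynomial in
theorem exists_coeff_notMem_C_mul_eq [IsDomain R] [Algebra R S] (q : Ideal R) [q.IsPrime]
    [IsLocalization.AtPrime S q] {ι : Type*} {F : MvPolynomial ι R} (hF : F ≠ 0) :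
    ∃ (c : R) (G : MvPolynomial ι R) (m : ι →₀ ℕ),
      G.coeff m ∉ q ∧ C (G.coeff m) * F = C c * G := by
  have hinj : Function.Injective (algebraMap R S) :=
    IsLocalization.injective S q.primeCompl_le_nonZeroDivisors
  have hmap := map_injective (σ := ι) _ hinj
  -- `G` is `F` divided by its content over `S`, with denominators cleared by an element of `R \ q`.
  obtain ⟨m, hm0, hm⟩ := exists_coeff_dvd ((map_ne_zero_iff _ hmap).2 hF)
  obtain ⟨H, hH⟩ := (C_dvd_iff_dvd_coeff _ _).2 hm
  have hHm : H.coeff m = 1 := by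
    apply mul_left_cancel₀ hm0
    rw [mul_one, ← coeff_C_mul, ← hH]
  let := algebraMvPolynomial (σ := ι) (R := R) (S := S)
  obtain ⟨⟨G, _, s, hs, rfl⟩, hG⟩ := IsLocalization.surj (q.primeCompl.map (C (σ := ι))) H
  simp only [algebraMap_def, map_C] at hG
  have hGm : G.coeff m = s := by
    apply hinj
    rw [← coeff_map, ← hG, mul_comm, coeff_C_mul, hHm, mul_one]
  refine ⟨F.coeff m, G, m, hGm ▸ hs, hmap ?_⟩
  rw [hGm, map_mul, map_mul, map_C, map_C, hH, coeff_map, ← hG]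
  ring

theorem residueTrdeg_anti {A : Type*} [IsDomain R] [Algebra R S] [CommRing A] [Algebra R A]
    (q : Ideal R) [q.IsPrime] [IsLocalization.AtPrime S q] {Q Q' : Ideal A} [Q.IsPrime]
    [Q'.IsPrime] (hle : Q ≤ Q') (hQ' : Q'.under R ≤ q) : residueTrdeg R Q' ≤ residueTrdeg R Q := by
  obtain ⟨ι, y, hy⟩ := exists_isTranscendenceBasis' (R ⧸ Q'.under R) (A ⧸ Q')
  obtain ⟨x, rfl⟩ := Ideal.Quotient.mk_surjective.comp_left y
  rw [residueTrdeg, ← hy.cardinalMk_eq_trdeg]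
  have hx' := algebraicIndependent_mk_comp_iff.1 hy.1
  suffices hx : AlgebraicIndependent (R ⧸ Q.under R) (Ideal.Quotient.mk Q ∘ x) from
    hx.cardinalMk_le_trdeg
  refine algebraicIndependent_mk_comp_iff.2 fun F hF n => ?_
  by_contra hn
  have hF0 : F ≠ 0 := by
    rintro rfl
    exact hn (zero_mem _)
  obtain ⟨c, G, m, hs, hsc⟩ := exists_coeff_notMem_C_mul_eq (S := S) q hF0
  have hsQ : G.coeff m ∉ Q.under R := fun h => hs (hQ' (Ideal.comap_mono hle h))
  have hc : c ∉ Q.under R := by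
    intro hc
    have hmem : G.coeff m * F.coeff n ∈ Q.under R := by
      rw [← MvPolynomial.coeff_C_mul, hsc, MvPolynomial.coeff_C_mul]
      exact Ideal.mul_mem_right _ _ hc
    exact (Ideal.IsPrime.mem_or_mem inferInstance hmem).elim hsQ hn
  have hG : MvPolynomial.aeval x G ∈ Q := by
    have hmem : algebraMap R A c * MvPolynomial.aeval x G ∈ Q := by
      rw [← MvPolynomial.aeval_C x c, ← map_mul, ← hsc, map_mul]
      exact Q.mul_mem_left _ hF
    exact (Ideal.IsPrime.mem_or_mem inferInstance hmem).resolve_left hc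
  exact hs (hQ' (hx' G (hle hG) m))

end ValuationRing

section Height

open Order

theorem height_le_height_map_add {α β : Type*} [Preorder α] [PartialOrder β] {f : α → β}
    (hf : Monotone f) {t : α → ℕ∞} {n : ℕ∞} {a : α}
    (hfiber : ∀ ⦃x y⦄, x < y → y ≤ a → f x = f y → t y + 1 ≤ t x)
    (ht : AntitoneOn t (Set.Iic a)) (hn : ∀ x ≤ a, t x ≤ n) :
    height a ≤ height (f a) + n := by
  have hlen (p : LTSeries α) : p.last ≤ a → p.length + t p.last ≤ height (f p.last) + n := by
    induction p using RelSeries.inductionOn' with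
    | singleton x =>
      intro hx
      simpa using le_add_left (hn x hx)
    | snoc p x hx ih =>
      rw [RelSeries.last_snoc, RelSeries.snoc_length]
      intro hxa
      replace hx : p.last < x := hx
      replace ih := ih (hx.le.trans hxa)
      rcases (hf hx.le).eq_or_lt with heq | hlt
      · calc ((p.length + 1 : ℕ) : ℕ∞) + t x = p.length + (t x + 1) := by
              push_cast; ring
          _ ≤ p.length + t p.last := by gcongr; exact hfiber hx hxa heq
          _ ≤ height (f x) + n := heq ▸ ih
      · calc ((p.length + 1 : ℕ) : ℕ∞) + t x = p.length + t x + 1 := by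
              push_cast; ring
          _ ≤ p.length + t p.last + 1 := by gcongr; exact ht (hx.le.trans hxa) hxa hx.le
          _ ≤ height (f p.last) + 1 + n := by rw [add_right_comm _ 1]; gcongr
          _ ≤ height (f x) + n := by gcongr; exact height_add_one_le hlt
  refine height_le fun p hp => ?_
  subst hp
  exact le_self_add.trans (hlen p le_rfl)

theorem height_le_height_comap {A B : Type*} [CommRing A] [CommRing B] {φ : B →+* A} {P : Ideal A}
    [hP : P.IsPrime] (h : ∀ a, ∃ s, φ s ∉ P ∧ φ s * a ∈ φ.range) :
    P.height ≤ (P.comap φ).height := by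
  have hmono : Monotone (PrimeSpectrum.comap φ) := fun _ _ h => Ideal.comap_mono h
  have hinj (x y : PrimeSpectrum A) (hxy : x < y) (hy : y ≤ ⟨P, hP⟩) :
      x.comap φ ≠ y.comap φ := by
    refine fun heq => hxy.not_ge fun a ha => ?_
    obtain ⟨s, hs, b, hb⟩ := h a
    have hb' : b ∈ (x.comap φ).asIdeal := by
      rw [heq, PrimeSpectrum.comap_asIdeal, Ideal.mem_comap, hb]
      exact y.asIdeal.mul_mem_left _ ha
    rw [PrimeSpectrum.comap_asIdeal, Ideal.mem_comap, hb] at hb'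
    exact (x.isPrime.mem_or_mem hb').resolve_left fun hsx => hs (hy (hxy.le hsx))
  have hheight := height_le_height_map_add (a := ⟨P, hP⟩) (t := 0) (n := 0) hmono
    (fun x y hxy hy heq => (hinj x y hxy hy heq).elim) antitoneOn_const fun _ _ => le_rfl
  rwa [add_zero, ← PrimeSpectrum.height_eq_orderHeight, ← PrimeSpectrum.height_eq_orderHeight]
    at hheight

end Height

section DimensionBounds

open Polynomial

theorem height_le_height_under_add_trdeg {R S A : Type*} [CommRing R] [IsDomain R] [CommRing S]
    [IsDomain S] [ValuationRing S] [Algebra R S] (q : Ideal R) [q.IsPrime]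
    [IsLocalization.AtPrime S q] [CommRing A] [IsDomain A] [Algebra R A] [FaithfulSMul R A]
    {P : Ideal A} [hP : P.IsPrime] (hPq : P.under R ≤ q) :
    P.height ≤ (P.under R).height + Cardinal.toENat (Algebra.trdeg R A) := by
  have hmono : Monotone (PrimeSpectrum.comap (algebraMap R A)) := fun _ _ h => Ideal.comap_mono h
  let t (x : PrimeSpectrum A) : ℕ∞ := Cardinal.toENat (residueTrdeg R x.asIdeal)
  have hanti : AntitoneOn t (Set.Iic ⟨P, hP⟩) := fun x _ y hy hxy =>
    Cardinal.toENat.monotone' (residueTrdeg_anti (S := S) q hxy ((Ideal.comap_mono hy).trans hPq))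
  have hfiber (x y : PrimeSpectrum A) (hxy : x < y)
      (h : x.comap (algebraMap R A) = y.comap (algebraMap R A)) : t y + 1 ≤ t x := by
    rw [← map_one Cardinal.toENat, ← map_add]
    exact Cardinal.toENat.monotone' (residueTrdeg_add_one_le hxy (congrArg PrimeSpectrum.asIdeal h))
  have hle (x : PrimeSpectrum A) (hx : x ≤ ⟨P, hP⟩) : t x ≤ Cardinal.toENat (Algebra.trdeg R A) :=
    (hanti (Set.mem_Iic.2 bot_le) hx bot_le).trans
      (Cardinal.toENat.monotone' residueTrdeg_bot_le)
  have hheight :=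
    height_le_height_map_add hmono (fun x y hxy _ => hfiber x y hxy) hanti hle
  rwa [← PrimeSpectrum.height_eq_orderHeight, ← PrimeSpectrum.height_eq_orderHeight] at hheight

theorem height_le_ringKrullDim_polynomial_of_valuationRing {R S A : Type*} [CommRing R] [IsDomain R]
    [CommRing S] [IsDomain S] [ValuationRing S] [Algebra R S] (q : Ideal R) [q.IsPrime]
    [IsLocalization.AtPrime S q] [CommRing A] [IsDomain A] [Algebra R A] [FaithfulSMul R A]
    (hA : Algebra.trdeg R A ≤ 1) {P : Ideal A} [P.IsPrime] (hPq : P.under R ≤ q) :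
    P.height ≤ ringKrullDim R[X] := by
  have htrdeg : Cardinal.toENat (Algebra.trdeg R A) ≤ 1 :=
    Cardinal.toENat_le_one.2 hA
  have hheight : P.height ≤ (P.under R).height + 1 :=
    (height_le_height_under_add_trdeg (S := S) q hPq).trans (by gcongr)
  calc (P.height : WithBot ℕ∞) ≤ (P.under R).height + 1 := mod_cast hheight
    _ ≤ ringKrullDim R + 1 := by gcongr; exact Ideal.height_le_ringKrullDim_of_isPrime
    _ ≤ ringKrullDim R[X] := ringKrullDim_succ_le_ringKrullDim_polynomial

theorem height_le_ringKrullDim_polynomial_of_coeff {R K : Type*} [CommRing R] [CommRing K]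
    [Algebra R K] {A : Subalgebra R K[X]} (hX : X ∈ A) {P : Ideal A} [P.IsPrime]
    (hA : ∀ f ∈ A, ∀ j, ¬ denominatorIdeal R (f.coeff j) ≤ P.under R) :
    P.height ≤ ringKrullDim R[X] := by
  let φ : R[X] →ₐ[R] A := aeval ⟨X, hX⟩
  have hφ (g : R[X]) : (φ g : K[X]) = g.map (algebraMap R K) := by
    rw [← aeval_X_left_eq_map]
    exact (aeval_algHom_apply A.val _ g).symm
  have hloc (f : A) : ∃ s, φ s ∉ P ∧ φ s * f ∈ φ.toRingHom.range := by
    obtain ⟨s, hs, g, hg⟩ := exists_notMem_smul_eq_map inferInstance (hA f f.2)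
    have hφs : φ (C s) = algebraMap R A s := φ.commutes s
    refine ⟨C s, hφs ▸ hs, g, Subtype.ext ?_⟩
    rw [hφs, ← Algebra.smul_def, Subalgebra.coe_smul, hg]
    exact hφ g
  calc (P.height : WithBot ℕ∞) ≤ (P.comap φ.toRingHom).height :=
        mod_cast height_le_height_comap (φ := φ.toRingHom) hloc
    _ ≤ ringKrullDim R[X] := Ideal.height_le_ringKrullDim_of_isPrime

end DimensionBounds

section IntegerValued

open Polynomial

variable {R A : Type*} [CommRing R] [CommRing A] [Algebra R A]

/-- The `R`-algebra `{f ∈ A[X] : f(R) ⊆ R}` of integer-valued polynomials with coefficients in an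
`R`-algebra `A`. It is `Int(R)` when `A` is the quotient field of `R`. -/
noncomputable def integerValued (R A : Type*) [CommRing R] [CommRing A] [Algebra R A] :
    Subalgebra R A[X] :=
  ⨅ a : R, (⊥ : Subalgebra R A).comap ((aeval (algebraMap R A a)).restrictScalars R)

theorem mem_integerValued {f : A[X]} :
    f ∈ integerValued R A ↔ ∀ a : R, f.eval (algebraMap R A a) ∈ (1 : Submodule R A) := by
  simp only [integerValued, Algebra.mem_iInf, Subalgebra.mem_comap, AlgHom.restrictScalars_apply,
    coe_aeval_eq_eval, Algebra.mem_bot, Submodule.mem_one, Set.mem_range]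

theorem X_mem_integerValued : X ∈ integerValued R A :=
  mem_integerValued.2 fun a => Submodule.mem_one.2 ⟨a, by rw [eval_X]⟩

theorem infinite_quotient_of_lt {R : Type*} [CommRing R] {p q : Ideal R} [p.IsPrime]
    (hlt : p < q) (hq : q ≠ ⊤) : Infinite (R ⧸ p) := by
  refine not_finite_iff_infinite.1 fun _ => hq ?_
  have hp : p.IsMaximal := Ideal.Quotient.maximal_of_isField p (Finite.isField_of_domain (R ⧸ p))
  exact hp.out.2 q hlt

theorem not_denominatorIdeal_coeff_le_of_forall_lt {q : Ideal R} [q.IsPrime]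
    (hq : ∀ x : A, (∀ p : Ideal R, p.IsPrime → p < q → ¬ denominatorIdeal R x ≤ p) →
      ¬ denominatorIdeal R x ≤ q) {f : A[X]} (hf : f ∈ integerValued R A) (j : ℕ) :
    ¬ denominatorIdeal R (f.coeff j) ≤ q := by
  refine hq _ fun p _ hpq => ?_
  have := infinite_quotient_of_lt hpq Ideal.IsPrime.ne_top'
  exact not_denominatorIdeal_coeff_le (mem_integerValued.1 hf) j

theorem trdeg_subalgebra_polynomial_le_one [IsDomain A] [FaithfulSMul R A] [Algebra.IsAlgebraic R A]
    (B : Subalgebra R A[X]) : Algebra.trdeg R B ≤ 1 := by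
  have : IsDomain R := (FaithfulSMul.algebraMap_injective R A).isDomain
  calc Algebra.trdeg R B ≤ Algebra.trdeg R A[X] :=
        trdeg_le_of_injective B.val Subtype.val_injective
    _ = Algebra.trdeg R A + Algebra.trdeg A A[X] := (trdeg_add_eq R A).symm
    _ = 1 := by rw [trdeg_of_isDomain, trdeg_eq_zero, zero_add]

theorem ringKrullDim_integerValued_le (R K : Type*) [CommRing R] [IsDomain R] [Field K]
    [Algebra R K] [IsFractionRing R K]
    (hess : ∀ (m : Ideal R) [m.IsMaximal], IsEssential (Localization.AtPrime m)) :
    ringKrullDim (integerValued R K) ≤ ringKrullDim R[X] := by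
  have : Algebra.IsAlgebraic R K := IsLocalization.isAlgebraic _ (nonZeroDivisors R)
  refine (ringKrullDim_le_iff_height_le _).2 fun P _ => ?_
  obtain ⟨m, _, hPm⟩ := Ideal.exists_le_maximal (P.under R) Ideal.IsPrime.ne_top'
  rcases valuationRing_or_not_denominatorIdeal_le (K := K) m (hess m) with _ | hm
  · exact height_le_ringKrullDim_polynomial_of_valuationRing (S := Localization.AtPrime m) m
      (trdeg_subalgebra_polynomial_le_one _) hPm
  · exact height_le_ringKrullDim_polynomial_of_coeff X_mem_integerValued fun f hf j hle =>
      not_denominatorIdeal_coeff_le_of_forall_lt hm hf j (hle.trans hPm)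

theorem toSubring_integerValued (R : Type*) [CommRing R] [IsDomain R] :
    (integerValued R (FractionRing R)).toSubring = IntPoly R := by
  ext f
  simp [IntPoly, Subring.mem_iInf, mem_integerValued]

end IntegerValued

theorem dim_intPoly_le_dim_polynomial_of_locallyEssential_general
    (R : Type*) [CommRing R] [IsDomain R]
    (hess : ∀ (m : Ideal R) [m.IsMaximal], IsEssential (Localization.AtPrime m)) :
    ringKrullDim (IntPoly R) ≤ ringKrullDim (Polynomial R) := by
  rw [← toSubring_integerValued]
  exact ringKrullDim_integerValued_le R (FractionRing R) hess

/-- If `R` is a finite-dimensional locally essential integral domain,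
written `R = ⋂_{p ∈ Δ} R_p` with each `R_p` a valuation domain, then
`dim(Int(R)) ≤ dim(R[X])`. -/
theorem dim_intPoly_le_dim_polynomial_of_locallyEssential
    (R : Type*) [CommRing R] [IsDomain R]
    (hfin : ringKrullDim R ≠ ⊤)
    (Δ : Set (Ideal R))
    (hΔprime : ∀ p ∈ Δ, p.IsPrime)
    (hΔval : ∀ p ∈ Δ, ∀ x : FractionRing R, x ∈ locSet R p ∨ x⁻¹ ∈ locSet R p)
    (hΔcap : Set.range (algebraMap R (FractionRing R)) = ⋂ p ∈ Δ, locSet R p)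
    (hloc : IsLocallyEssential R) :
    ringKrullDim (IntPoly R) ≤ ringKrullDim (Polynomial R) :=
  dim_intPoly_le_dim_polynomial_of_locallyEssential_general R fun m _ => hloc m inferInstance
end

section
/- Let R be a finite-dimensional locally essential integral domain, written R = ⋂_{p∈Δ} R_p with each R_p a valuation domain. Then dim(R[X]) ≤ dim(Int(R)). -/
/-!
We bound `dim R_m[X]` by `dim Int(R)` for each maximal ideal `m`. If `R_m` is a valuation domain,
then it is Bézout, so `dim R_m[X] ≤ dim R_m + 1`, while evaluation at `0` gives
`dim R + 1 ≤ dim Int(R)`. Otherwise `R_m` is the intersection of its localizations at a family of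
nonmaximal primes. These contract to primes `p ⊊ m` of `R`, so `R/p` is infinite, and Lagrange
interpolation at points of `R` that are pairwise incongruent mod `p` gives `Int(R) ⊆ R_p[X]`. Hence
`R[X] ⊆ Int(R) ⊆ R_m[X]`, and `R_m[X]` is a localization of `Int(R)`.
-/

section

open Polynomial

variable {R : Type*} [CommRing R]

/-! ### Polynomial rings over Bézout domains -/

lemma krullDim_le_add_one_of_strictMonoOn {α β : Type*} [Preorder α] [Preorder β] {f : α → β}
    (hf : Monotone f) {s : Set α} (hs : IsUpperSet s) (hfs : StrictMonoOn f s)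
    (hfsc : StrictMonoOn f sᶜ) : Order.krullDim α ≤ Order.krullDim β + 1 := by
  classical
  by_cases htop : Order.krullDim β = ⊤
  · rw [htop]
    exact le_top
  have height_lt_top (b : β) : Order.height b < ⊤ :=
    WithBot.coe_lt_coe.mp ((Order.height_le_krullDim b).trans_lt (lt_top_iff_ne_top.mpr htop))
  let rank (a : α) : ℕ∞ := Order.height (f a) + if a ∈ s then 1 else 0
  have rank_strictMono : StrictMono rank := by
    intro a b hab
    have height_lt (h : f a < f b) := Order.height_strictMono h (height_lt_top _)
    by_cases ha : a ∈ s
    · have hb : b ∈ s := hs hab.le ha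
      simpa [rank, ha, hb] using height_lt (hfs ha hb hab)
    by_cases hb : b ∈ s
    · simpa [rank, ha, hb] using (ENat.lt_add_one_iff (height_lt_top _).ne).mpr
        (Order.height_mono (hf hab.le))
    · simpa [rank, ha, hb] using height_lt (hfsc ha hb hab)
  rw [Order.krullDim_eq_iSup_height]
  refine iSup_le fun a => ?_
  calc (Order.height a : WithBot ℕ∞)
      ≤ Order.height (rank a) := by
        exact_mod_cast Order.height_le_height_apply_of_strictMono rank rank_strictMono a
    _ = rank a := by rw [Order.height_enat]
    _ ≤ (Order.height (f a) + 1 : ℕ∞) := by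
        refine WithBot.coe_le_coe.mpr (add_le_add_right ?_ _)
        split_ifs <;> simp
    _ ≤ Order.krullDim β + 1 := by
        push_cast
        gcongr
        exact Order.height_le_krullDim _

lemma comap_C_lt_comap_C_of_lt_of_lt {P Q Q' : PrimeSpectrum R[X]} (hPQ : P < Q) (hQQ' : Q < Q') :
    PrimeSpectrum.comap C P < PrimeSpectrum.comap C Q' := by
  have comap_mono : Monotone (PrimeSpectrum.comap (C : R →+* R[X])) := fun _ _ h =>
    Ideal.comap_mono h
  refine (comap_mono (hPQ.trans hQQ').le).lt_of_ne fun heq => ?_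
  set p := PrimeSpectrum.comap C Q with hp
  have hP : PrimeSpectrum.comap C P = p :=
    (comap_mono hPQ.le).antisymm (heq ▸ comap_mono hQQ'.le)
  have fiber_dim : Order.krullDim (PrimeSpectrum.comap (C : R →+* R[X]) ⁻¹' {p}) ≤ 1 := by
    rw [← algebraMap_eq, Order.krullDim_eq_of_orderIso
      (PrimeSpectrum.preimageOrderIsoFiber R R[X] p), ← ringKrullDim,
      ← ringKrullDim_eq_of_ringEquiv (polyEquivTensor R p.asIdeal.ResidueField).toRingEquiv]
    exact_mod_cast (Ring.krullDimLE_iff (n := 1) (R := p.asIdeal.ResidueField[X])).1 inferInstance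
  rcases Order.krullDim_le_one_iff.mp fiber_dim ⟨Q, hp.symm⟩ with hmin | hmax
  · exact hPQ.not_ge (hmin (b := ⟨P, hP⟩) hPQ.le)
  · exact hQQ'.not_ge (hmax (b := ⟨Q', heq.symm.trans hP⟩) hQQ'.le)

lemma exists_eq_C_mul_contentIdeal_eq_top [IsDomain R] [IsBezout R] (f : R[X]) :
    ∃ (c : R) (g : R[X]), f = C c * g ∧ g.contentIdeal = ⊤ := by
  rcases eq_or_ne f 0 with rfl | hf
  · exact ⟨0, 1, by simp, contentIdeal_one⟩
  have hprin : f.contentIdeal.IsPrincipal := IsBezout.isPrincipal_of_FG _ f.contentIdeal_FG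
  obtain ⟨g, hg⟩ := hprin.contentIdeal_generator_dvd
  have hc_mem : hprin.generator ∈ f.contentIdeal := hprin.generator_mem
  generalize hprin.generator = c at hg hc_mem
  have hc : c ≠ 0 := by
    rintro rfl
    exact hf (by rw [hg, C_0, zero_mul])
  refine ⟨c, g, hg, (Ideal.eq_top_iff_one _).mpr ?_⟩
  have hmem : c ∈ Ideal.span {c} * g.contentIdeal := by
    rw [← contentIdeal_C]
    exact contentIdeal_mul_le_mul_contentIdeal (p := C c) g (hg ▸ hc_mem)
  obtain ⟨y, hy, hcy⟩ := Ideal.mem_span_singleton_mul.mp hmem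
  rwa [← (mul_eq_left₀ hc).mp hcy]

/-- The primes `P` of `R[X]` that are not extended from `R`, that is `P ≠ (P ∩ R)R[X]`. -/
def nonExtendedPrimes (R : Type*) [CommRing R] : Set (PrimeSpectrum R[X]) :=
  {P | ¬ P.asIdeal ≤ (P.asIdeal.comap C).map C}

lemma strictMonoOn_comap_C_nonExtendedPrimes :
    StrictMonoOn (PrimeSpectrum.comap C) (nonExtendedPrimes R) := by
  intro P hP Q _ hPQ
  let P₀ : PrimeSpectrum R[X] := ⟨(P.asIdeal.comap C).map C, inferInstance⟩
  have hP₀ : PrimeSpectrum.comap C P₀ = PrimeSpectrum.comap C P := by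
    refine PrimeSpectrum.ext (le_antisymm ?_ Ideal.le_comap_map)
    exact Ideal.comap_mono (f := C) (Ideal.map_comap_le (f := C) (K := P.asIdeal))
  exact hP₀ ▸ comap_C_lt_comap_C_of_lt_of_lt (P := P₀)
    (lt_of_le_not_ge Ideal.map_comap_le hP) hPQ

lemma strictMonoOn_comap_C_compl_nonExtendedPrimes :
    StrictMonoOn (PrimeSpectrum.comap C) (nonExtendedPrimes R)ᶜ := by
  intro P _ Q hQ hPQ
  refine lt_of_le_not_ge (Ideal.comap_mono hPQ.le) fun hle => hPQ.not_ge ?_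
  calc Q.asIdeal ≤ (Q.asIdeal.comap C).map C := not_not.mp hQ
    _ ≤ (P.asIdeal.comap C).map C := Ideal.map_mono hle
    _ ≤ P.asIdeal := Ideal.map_comap_le

lemma isUpperSet_nonExtendedPrimes [IsDomain R] [IsBezout R] :
    IsUpperSet (nonExtendedPrimes R) := by
  intro P Q hPQ hP hQ
  obtain ⟨f, hfP, hf⟩ := SetLike.not_le_iff_exists.mp hP
  obtain ⟨c, g, rfl, hg⟩ := exists_eq_C_mul_contentIdeal_eq_top f
  rcases P.isPrime.mem_or_mem hfP with hc | hgP
  · exact hf (Ideal.mul_mem_right _ _ (Ideal.mem_map_of_mem C hc))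
  have hcontent : g.contentIdeal ≤ Q.asIdeal.comap C := by
    rw [contentIdeal_def, Ideal.span_le]
    intro a ha
    obtain ⟨n, -, rfl⟩ := mem_coeffs_iff.mp ha
    exact Ideal.mem_map_C_iff.mp (hQ (hPQ hgP)) n
  exact (Ideal.comap_isPrime C Q.asIdeal).ne_top (top_le_iff.mp (hg ▸ hcontent))

theorem ringKrullDim_polynomial_le_of_isBezout (R : Type*) [CommRing R] [IsDomain R] [IsBezout R] :
    ringKrullDim R[X] ≤ ringKrullDim R + 1 :=
  krullDim_le_add_one_of_strictMonoOn (f := PrimeSpectrum.comap C) (fun _ _ h => Ideal.comap_mono h)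
    isUpperSet_nonExtendedPrimes strictMonoOn_comap_C_nonExtendedPrimes
    strictMonoOn_comap_C_compl_nonExtendedPrimes

/-! ### Prime ideals and localization -/

lemma ringKrullDim_le_of_isLocalization (M : Submonoid R) (S : Type*) [CommRing S] [Algebra R S]
    [IsLocalization M S] : ringKrullDim S ≤ ringKrullDim R := by
  refine (ringKrullDim_le_iff_height_le _).mpr fun P hP => ?_
  rw [← IsLocalization.height_under M P]
  exact Ideal.height_le_ringKrullDim_of_isPrime

lemma ringKrullDim_le_of_injective_of_exists_mul_eq {B : Type*} [CommRing B] {f : R →+* B}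
    (hf : Function.Injective f) {M : Submonoid R} (S : Type*) [CommRing S] [Algebra R S]
    [IsLocalization M S] (hB : ∀ b, ∃ s ∈ M, ∃ a, f s * b = f a) :
    ringKrullDim S ≤ ringKrullDim B := by
  let := f.toAlgebra
  let Bₘ := Localization (Algebra.algebraMapSubmonoid B M)
  have : IsLocalization M Bₘ := by
    refine (isLocalization_iff ..).mpr ⟨fun s => ?_, fun z => ?_, fun {x y} hxy => ?_⟩
    · rw [IsScalarTower.algebraMap_apply R B Bₘ]
      exact IsLocalization.map_units Bₘ
        (⟨f s, s, s.2, rfl⟩ : Algebra.algebraMapSubmonoid B M)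
    · obtain ⟨⟨b, _, t, ht, rfl⟩, hz⟩ := IsLocalization.surj (Algebra.algebraMapSubmonoid B M) z
      obtain ⟨s, hs, a, ha⟩ := hB b
      refine ⟨(a, ⟨t * s, mul_mem ht hs⟩), ?_⟩
      simp only [IsScalarTower.algebraMap_apply R B Bₘ] at hz ⊢
      rw [map_mul, map_mul, ← mul_assoc, hz, ← map_mul, mul_comm b]
      exact congrArg _ ha
    · simp only [IsScalarTower.algebraMap_apply R B Bₘ] at hxy
      obtain ⟨⟨_, c, hc, rfl⟩, hcxy⟩ :=
        IsLocalization.exists_of_eq (M := Algebra.algebraMapSubmonoid B M) hxy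
      refine ⟨⟨c, hc⟩, hf ?_⟩
      rw [map_mul, map_mul]
      exact hcxy
  rw [ringKrullDim_eq_of_ringEquiv (IsLocalization.algEquiv M S Bₘ).toRingEquiv]
  exact ringKrullDim_le_of_isLocalization (Algebra.algebraMapSubmonoid B M) Bₘ

attribute [local instance] Polynomial.algebra in
lemma ringKrullDim_polynomial_le_of_forall_isMaximal {d : WithBot ℕ∞}
    (h : ∀ (m : Ideal R) [m.IsMaximal], ringKrullDim (Localization.AtPrime m)[X] ≤ d) :
    ringKrullDim R[X] ≤ d := by
  refine (ringKrullDim_le_iff_height_le _).mpr fun P hP => ?_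
  obtain ⟨m, hm, hle⟩ := (P.comap C).exists_le_maximal (Ideal.comap_isPrime C P).ne_top
  let := Polynomial.isLocalization m.primeCompl (Localization.AtPrime m)
  have hdisj : Disjoint (m.primeCompl.map C : Set R[X]) P := by
    rw [Set.disjoint_left]
    rintro _ ⟨s, hs, rfl⟩ hsP
    exact hs (hle hsP)
  have := IsLocalization.isPrime_of_isPrime_disjoint _ (Localization.AtPrime m)[X] P hP hdisj
  rw [← IsLocalization.height_map_of_disjoint (S := (Localization.AtPrime m)[X]) _ P hdisj]
  exact Ideal.height_le_ringKrullDim_of_isPrime.trans (h m)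

lemma infinite_quotient_of_lt_s2 {p m : Ideal R} [p.IsPrime] [hm : m.IsPrime] (h : p < m) :
    Infinite (R ⧸ p) := by
  by_contra hfin
  rw [not_infinite_iff_finite] at hfin
  have hp : p.IsMaximal := Ideal.Quotient.maximal_of_isField p (Finite.isField_of_domain (R ⧸ p))
  exact h.ne (hp.eq_of_le hm.ne_top h.le)

lemma comap_lt_of_ne_maximalIdeal {m : Ideal R} [m.IsPrime] {P : Ideal (Localization.AtPrime m)}
    [hprime : P.IsPrime] (hP : P ≠ IsLocalRing.maximalIdeal _) :
    P.comap (algebraMap R (Localization.AtPrime m)) < m :=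
  ((IsLocalization.orderEmbedding m.primeCompl (Localization.AtPrime m)).strictMono
    ((IsLocalRing.le_maximalIdeal hprime.ne_top).lt_of_ne hP)).trans_eq
      Localization.AtPrime.under_maximalIdeal

/-! ### Localizations inside the quotient field -/

variable [IsDomain R]

lemma coe_ofField_primeCompl (p : Ideal R) [p.IsPrime] :
    (Localization.subalgebra.ofField (FractionRing R) p.primeCompl
      p.primeCompl_le_nonZeroDivisors : Set (FractionRing R)) = locSet R p := by
  ext x
  simp only [locSet, div_eq_mul_inv]
  exact ⟨fun ⟨a, s, hs, hx⟩ => ⟨a, s, hs, hx⟩, fun ⟨a, s, hs, hx⟩ => ⟨a, s, hs, hx⟩⟩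

lemma locSet_maximalIdeal [IsLocalRing R] :
    locSet R (IsLocalRing.maximalIdeal R) = Set.range (algebraMap R (FractionRing R)) := by
  ext x
  constructor
  · rintro ⟨a, s, hs, rfl⟩
    obtain ⟨u, rfl⟩ := IsLocalRing.notMem_maximalIdeal.mp hs
    refine ⟨a * ↑u⁻¹, ?_⟩
    rw [eq_div_iff (IsFractionRing.to_map_ne_zero_of_mem_nonZeroDivisors
      (mem_nonZeroDivisors_of_ne_zero u.ne_zero)), ← map_mul, u.inv_mul_cancel_right]
  · rintro ⟨a, rfl⟩
    exact ⟨a, 1, (Ideal.ne_top_iff_one _).mp Ideal.IsPrime.ne_top', by simp⟩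

lemma IsEssential.exists_ne_maximalIdeal [IsLocalRing R] (h : IsEssential R)
    (hR : ¬ ValuationRing R) :
    ∃ Δ : Set (Ideal R), (∀ P ∈ Δ, P.IsPrime ∧ P ≠ IsLocalRing.maximalIdeal R) ∧
      ⋂ P ∈ Δ, locSet R P = Set.range (algebraMap R (FractionRing R)) := by
  obtain ⟨Δ, hprime, hval, hcap⟩ := h
  refine ⟨Δ, fun P hP => ⟨hprime P hP, ?_⟩, hcap.symm⟩
  rintro rfl
  have hval := hval _ hP
  rw [locSet_maximalIdeal] at hval
  exact hR ((ValuationRing.iff_isInteger_or_isInteger R (FractionRing R)).mpr hval)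

lemma mem_locSet_of_forall_mem_locSet_comap {m : Ideal R} [m.IsPrime] {L : Type*} [CommRing L]
    [IsDomain L] [Algebra R L] [IsLocalization.AtPrime L m] {Δ : Set (Ideal L)}
    (hΔ : ⋂ P ∈ Δ, locSet L P ⊆ Set.range (algebraMap L (FractionRing L))) {x : FractionRing R}
    (hx : ∀ P ∈ Δ, x ∈ locSet R (P.comap (algebraMap R L))) : x ∈ locSet R m := by
  have hinj : Function.Injective (algebraMap R L) :=
    IsLocalization.injective L m.primeCompl_le_nonZeroDivisors
  let φ : FractionRing R →+* FractionRing L := IsFractionRing.map hinj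
  have hφ (r : R) : φ (algebraMap R _ r) = algebraMap L _ (algebraMap R L r) :=
    IsLocalization.map_eq _ r
  have hφx : φ x ∈ ⋂ P ∈ Δ, locSet L P := by
    refine Set.mem_iInter₂.mpr fun P hP => ?_
    obtain ⟨a, s, hs, rfl⟩ := hx P hP
    exact ⟨algebraMap R L a, algebraMap R L s, hs, by rw [map_div₀, hφ, hφ]⟩
  obtain ⟨y, hy⟩ : φ x ∈ Set.range (algebraMap L (FractionRing L)) := hΔ hφx
  obtain ⟨⟨t, u⟩, hu⟩ := IsLocalization.surj m.primeCompl y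
  refine ⟨t, u, u.2, φ.injective ?_⟩
  rw [map_div₀, hφ, hφ, ← hu, map_mul, ← hy, mul_div_cancel_right₀]
  exact (map_ne_zero_iff _ (IsFractionRing.injective L _)).mpr
    (IsLocalization.map_units L u).ne_zero

/-! ### Integer-valued polynomials -/

lemma coeff_mem_of_eval_mem {K ι : Type*} [Field K] (S : Subring K) {s : Finset ι} {v : ι → K}
    (hinj : Set.InjOn v s) (hv : ∀ i ∈ s, v i ∈ S)
    (hinv : ∀ i ∈ s, ∀ j ∈ s, i ≠ j → (v i - v j)⁻¹ ∈ S) {f : K[X]} (hdeg : f.degree < s.card)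
    (hf : ∀ i ∈ s, f.eval (v i) ∈ S) (n : ℕ) : f.coeff n ∈ S := by
  classical
  have C_mem {x : K} (hx : x ∈ S) : C x ∈ liftsRing S.subtype := ⟨C ⟨x, hx⟩, by simp⟩
  have X_mem : X ∈ liftsRing S.subtype := ⟨X, by simp⟩
  have hlifts : f ∈ liftsRing S.subtype := by
    rw [Lagrange.eq_interpolate hinj hdeg, Lagrange.interpolate_apply]
    refine sum_mem fun i hi => mul_mem (C_mem (hf i hi)) (prod_mem fun j hj => ?_)
    obtain ⟨hji, hj⟩ := Finset.mem_erase.mp hj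
    exact mul_mem (C_mem (hinv i hi j hj hji.symm)) (sub_mem X_mem (C_mem (hv j hj)))
  obtain ⟨a, ha⟩ := (lifts_iff_coeff_lifts f).mp ((lifts_iff_liftsRing _ f).mpr hlifts) n
  exact ha ▸ a.2

namespace IntPoly

lemma mem_iff {f : (FractionRing R)[X]} :
    f ∈ IntPoly R ↔ ∀ a : R, f.eval (algebraMap R (FractionRing R) a) ∈
      (algebraMap R (FractionRing R)).range := by
  simp [IntPoly, Subring.mem_iInf]

/-- The inclusion `R[X] → Int(R)`. -/
noncomputable def ofPolynomial (R : Type*) [CommRing R] [IsDomain R] : R[X] →+* IntPoly R :=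
  (mapRingHom (algebraMap R (FractionRing R))).codRestrict (IntPoly R) fun f =>
    mem_iff.mpr fun a => ⟨f.eval a, by simp [eval_map_algebraMap, aeval_algebraMap_apply]⟩

lemma coe_ofPolynomial (f : R[X]) :
    (ofPolynomial R f : (FractionRing R)[X]) = f.map (algebraMap R (FractionRing R)) := rfl

lemma ofPolynomial_injective : Function.Injective (ofPolynomial R) := fun _ _ h =>
  map_injective _ (IsFractionRing.injective R (FractionRing R)) (congrArg Subtype.val h)

/-- Evaluation at `0` as a map `Int(R) → R`, where `R` is encoded as its image in the quotient
field. -/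
noncomputable def evalZero (R : Type*) [CommRing R] [IsDomain R] :
    IntPoly R →+* (algebraMap R (FractionRing R)).range :=
  ((evalRingHom 0).comp (IntPoly R).subtype).codRestrict _ fun f => by
    simpa using mem_iff.mp f.2 0

lemma coe_evalZero_ofPolynomial (f : R[X]) :
    (evalZero R (ofPolynomial R f) : FractionRing R) =
      algebraMap R (FractionRing R) (f.eval 0) := by
  change (f.map (algebraMap R (FractionRing R))).eval 0 = _
  rw [← map_zero (algebraMap R (FractionRing R)), eval_map_apply]

theorem ringKrullDim_add_one_le : ringKrullDim R + 1 ≤ ringKrullDim (IntPoly R) := by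
  have hinj : Function.Injective (algebraMap R (FractionRing R)) := IsFractionRing.injective _ _
  rw [ringKrullDim_eq_of_ringEquiv (RingEquiv.ofBijective
    (algebraMap R (FractionRing R)).rangeRestrict
    ⟨fun a b h => hinj (congrArg Subtype.val h), RingHom.rangeRestrict_surjective _⟩)]
  refine ringKrullDim_succ_le_of_surjective (evalZero R) ?_ (r := ofPolynomial R X) ?_ ?_
  · rintro ⟨_, b, rfl⟩
    exact ⟨ofPolynomial R (C b), Subtype.ext (by simp [coe_evalZero_ofPolynomial])⟩
  · exact mem_nonZeroDivisors_of_ne_zero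
      ((map_ne_zero_iff (ofPolynomial R) ofPolynomial_injective).mpr X_ne_zero)
  · exact Subtype.ext (by simp [coe_evalZero_ofPolynomial])

lemma coeff_mem_locSet_of_infinite {p : Ideal R} [p.IsPrime] [Infinite (R ⧸ p)]
    {f : (FractionRing R)[X]} (hf : f ∈ IntPoly R) (n : ℕ) : f.coeff n ∈ locSet R p := by
  let S := Localization.subalgebra.ofField (FractionRing R) p.primeCompl
    p.primeCompl_le_nonZeroDivisors
  have hS : (S : Set (FractionRing R)) = locSet R p := coe_ofField_primeCompl p
  let v (x : R ⧸ p) : R := Quotient.out x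
  have hv {x y : R ⧸ p} (hxy : x ≠ y) : v x - v y ∉ p := by
    rwa [← Ideal.Quotient.eq, Ideal.Quotient.mk_out, Ideal.Quotient.mk_out]
  obtain ⟨s, hs⟩ := Infinite.exists_subset_card_eq (R ⧸ p) (f.natDegree + 1)
  rw [← hS]
  refine coeff_mem_of_eval_mem S.toSubring (s := s) (v := fun x => algebraMap R _ (v x))
    ?_ ?_ ?_ ?_ ?_ n
  · intro x _ y _ hxy
    by_contra hne
    exact hv hne (by simp [IsFractionRing.injective R (FractionRing R) hxy])
  · exact fun x _ => S.algebraMap_mem _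
  · intro x _ y _ hxy
    change _ ∈ (S : Set (FractionRing R))
    rw [hS]
    exact ⟨1, v x - v y, hv hxy, by simp⟩
  · rw [hs]
    exact degree_le_natDegree.trans_lt (by exact_mod_cast Nat.lt_succ_self _)
  · intro x _
    obtain ⟨b, hb⟩ := mem_iff.mp hf (v x)
    exact hb ▸ S.algebraMap_mem b

lemma coeff_mem_locSet_of_isEssential_of_not_valuationRing {m : Ideal R} [m.IsPrime]
    (hm : IsEssential (Localization.AtPrime m)) (hV : ¬ ValuationRing (Localization.AtPrime m))
    {f : (FractionRing R)[X]} (hf : f ∈ IntPoly R) (n : ℕ) : f.coeff n ∈ locSet R m := by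
  obtain ⟨Δ, hΔ, hcap⟩ := hm.exists_ne_maximalIdeal hV
  refine mem_locSet_of_forall_mem_locSet_comap hcap.subset fun P hP => ?_
  obtain ⟨hprime, hne⟩ := hΔ P hP
  have := infinite_quotient_of_lt_s2 (comap_lt_of_ne_maximalIdeal hne)
  exact coeff_mem_locSet_of_infinite hf n

lemma exists_C_mul_eq_ofPolynomial {m : Ideal R} [m.IsPrime] {f : IntPoly R}
    (hf : ∀ n, (f : (FractionRing R)[X]).coeff n ∈ locSet R m) :
    ∃ s ∈ m.primeCompl.map (C : R →+* R[X]), ∃ g : R[X],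
      ofPolynomial R s * f = ofPolynomial R g := by
  let S := Localization.subalgebra.ofField (FractionRing R) m.primeCompl
    m.primeCompl_le_nonZeroDivisors
  have hS : (S : Set (FractionRing R)) = locSet R m := coe_ofField_primeCompl m
  obtain ⟨g, hg⟩ : ∃ g : S[X], g.map (algebraMap S (FractionRing R)) = f := by
    refine (mem_lifts _).mp ((lifts_iff_coeff_lifts _).mpr fun n => ?_)
    rw [← hS] at hf
    exact ⟨⟨_, hf n⟩, rfl⟩
  obtain ⟨s, hs, hsg⟩ := IsLocalization.integerNormalization_spec m.primeCompl g
  refine ⟨C s, ⟨s, hs, rfl⟩, IsLocalization.integerNormalization m.primeCompl g, Subtype.ext ?_⟩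
  have h := congrArg (map (algebraMap S (FractionRing R))) hsg
  rw [map_map, ← IsScalarTower.algebraMap_eq, ← algebraMap_smul S s g,
    Polynomial.map_smul, ← IsScalarTower.algebraMap_apply, hg] at h
  rw [Subring.coe_mul, coe_ofPolynomial, coe_ofPolynomial, map_C, h, smul_eq_C_mul]

end IntPoly

attribute [local instance] Polynomial.algebra in
theorem dim_polynomial_le_dim_intPoly_of_locallyEssential_general (R : Type*) [CommRing R]
    [IsDomain R] (hloc : ∀ (m : Ideal R) [m.IsMaximal], IsEssential (Localization.AtPrime m)) :
    ringKrullDim R[X] ≤ ringKrullDim (IntPoly R) := by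
  refine ringKrullDim_polynomial_le_of_forall_isMaximal fun m _ => ?_
  by_cases hV : ValuationRing (Localization.AtPrime m)
  · calc ringKrullDim (Localization.AtPrime m)[X]
        ≤ ringKrullDim (Localization.AtPrime m) + 1 := ringKrullDim_polynomial_le_of_isBezout _
      _ ≤ ringKrullDim R + 1 := by
          gcongr
          exact ringKrullDim_le_of_isLocalization m.primeCompl _
      _ ≤ ringKrullDim (IntPoly R) := IntPoly.ringKrullDim_add_one_le
  · have := Polynomial.isLocalization m.primeCompl (Localization.AtPrime m)
    exact ringKrullDim_le_of_injective_of_exists_mul_eq IntPoly.ofPolynomial_injective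
      (M := m.primeCompl.map C) _ fun f => IntPoly.exists_C_mul_eq_ofPolynomial
        (IntPoly.coeff_mem_locSet_of_isEssential_of_not_valuationRing (hloc m) hV f.2)

end

/-- If `R` is a finite-dimensional locally essential integral domain,
written `R = ⋂_{p ∈ Δ} R_p` with each `R_p` a valuation domain, then
`dim(R[X]) ≤ dim(Int(R))`. -/
theorem dim_polynomial_le_dim_intPoly_of_locallyEssential
    (R : Type*) [CommRing R] [IsDomain R]
    (hfin : ringKrullDim R ≠ ⊤)
    (Δ : Set (Ideal R))
    (hΔprime : ∀ p ∈ Δ, p.IsPrime)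
    (hΔval : ∀ p ∈ Δ, ∀ x : FractionRing R, x ∈ locSet R p ∨ x⁻¹ ∈ locSet R p)
    (hΔcap : Set.range (algebraMap R (FractionRing R)) = ⋂ p ∈ Δ, locSet R p)
    (hloc : IsLocallyEssential R) :
    ringKrullDim (Polynomial R) ≤ ringKrullDim (IntPoly R) :=
  dim_polynomial_le_dim_intPoly_of_locallyEssential_general R fun m hm => hloc m hm.isPrime
end

section
/- For every integer r ≥ 2 there exists an integral domain D such that: (i) D is essential; (ii) dim(D) = dim_v(D) = r (so D is an r-dimensional Jaffard domain); and (iii) D is not locally essential, i.e., there exists a prime ideal q of D such that the localization D_q is not an essential domain. -/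
/-- The valuative dimension of a domain `R`: the supremum of the Krull dimensions of
the valuation overrings of `R` (valuation subrings of the quotient field containing `R`). -/
noncomputable def valuativeDim (R : Type*) [CommRing R] [IsDomain R] : WithBot ℕ∞ :=
  ⨆ W : {W : ValuationSubring (FractionRing R) //
      Set.range (algebraMap R (FractionRing R)) ⊆ (W : Set (FractionRing R))},
    ringKrullDim (W : ValuationSubring (FractionRing R))

/-!
Let `E ⊆ F = E(Y₁, …, Yᵣ)`, where `E` is generated over `ℚ` by countably many rows of countably many
variables. A chain of `r` primes of `E[Y₁, …, Yᵣ]` gives a valuation ring `W` of `F` and a proper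
valuation ring of its residue field. The preimage `R` in `W` of the algebraic closure of `E` in the
residue field is an integrally closed local ring contained in a valuation ring of dimension `r`.
It is not essential: every valuation ring `R_p` either is `F` or contains `W`.

`R` is an intersection of valuation rings `Uᵢ`, each listed infinitely often. Let `Vᵢ` agree with
`Uᵢ` on the field generated by all variables outside the `i`-th row, and be the Gauss extension
that makes the variables of the `i`-th row take all values of `Uᵢ`. An element of `F` involves
finitely many rows, so `D = ⋂ Vᵢ` is contained in `R`, and the row variables, which are units
of `R`, serve as denominators: all `Vᵢ` and `R` are localizations of `D`, and every valuation
overring of `D` contains `R` or some `Vᵢ`. Valuation overrings of `R` have dimension at most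
`r = tr.deg(F/E)`.
-/

namespace EssentialJaffard

open IsLocalRing

section Dominating

variable {A K : Type*} [CommRing A] [Field K]

theorem exists_valuationSubring_ker_residue_eq (f : A →+* K) (P : Ideal A) [P.IsPrime]
    (hP : RingHom.ker f ≤ P) :
    ∃ (V : ValuationSubring K) (g : A →+* V),
      V.subtype.comp g = f ∧ RingHom.ker ((residue V).comp g) = P := by
  let π : A →+* f.range := f.rangeRestrict
  have hπ : Function.Surjective π := f.rangeRestrict_surjective
  have hker : RingHom.ker π ≤ P := (f.ker_rangeRestrict).trans_le hP
  have hQ : (P.map π).IsPrime := Ideal.map_isPrime_of_surjective hπ hker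
  obtain ⟨V, hle, hlocal⟩ := (LocalSubring.ofPrime f.range (P.map π)).exists_le_valuationSubring
  let O : Subring K := (LocalSubring.ofPrime f.range (P.map π)).toSubring
  let g : A →+* V := ((Subring.inclusion hle).comp (algebraMap f.range O)).comp π
  refine ⟨V, g, rfl, ?_⟩
  ext a
  have hmem : π a ∈ P.map π ↔ a ∈ P := by
    rw [← Ideal.mem_comap, Ideal.comap_map_of_surjective π hπ, ← RingHom.ker_eq_comap_bot,
      sup_eq_left.2 hker]
  rw [RingHom.mem_ker, RingHom.comp_apply, residue_eq_zero_iff, mem_maximalIdeal, mem_nonunits_iff,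
    ← hmem, ← not_iff_not, not_not]
  exact (isUnit_map_iff (Subring.inclusion hle) _).trans
    (IsLocalization.AtPrime.isUnit_to_map_iff O (P.map π) (π a))

end Dominating

section ResiduePullback

variable {F : Type*} [Field F] {W : ValuationSubring F}

/-- The preimage in the field `F` of a subring of the residue field of a valuation ring of `F`. -/
def residuePullback (W : ValuationSubring F) (A : Subring (ResidueField W)) : Subring F :=
  (A.comap (residue W)).map W.subtype

theorem mem_residuePullback {A : Subring (ResidueField W)} {x : F} :
    x ∈ residuePullback W A ↔ ∃ h : x ∈ W, residue W ⟨x, h⟩ ∈ A := by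
  simp [residuePullback, Subring.mem_map]

theorem residuePullback_mono {A B : Subring (ResidueField W)} (h : A ≤ B) :
    residuePullback W A ≤ residuePullback W B := fun _ hx =>
  let ⟨hxW, hxA⟩ := mem_residuePullback.1 hx
  mem_residuePullback.2 ⟨hxW, h hxA⟩

theorem residuePullback_le (A : Subring (ResidueField W)) : residuePullback W A ≤ W.toSubring :=
  fun _ hx => (mem_residuePullback.1 hx).1

theorem mem_residuePullback_of_valuation_lt_one (A : Subring (ResidueField W)) {x : F}
    (hx : W.valuation x < 1) : x ∈ residuePullback W A := by
  have hxW : x ∈ W := (W.valuation_le_one_iff x).1 hx.le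
  refine mem_residuePullback.2 ⟨hxW, ?_⟩
  rw [(residue_eq_zero_iff _).2 ((W.valuation_lt_one_iff ⟨x, hxW⟩).2 hx)]
  exact A.zero_mem

theorem exists_valuation_lt_one (hW : W ≠ ⊤) : ∃ t : F, t ≠ 0 ∧ W.valuation t < 1 := by
  by_contra! h
  refine hW (eq_top_iff.2 fun x _ => ?_)
  rcases eq_or_ne x 0 with rfl | hx
  · exact W.zero_mem
  · simpa [inv_inv] using (W.mem_or_inv_mem x).elim id fun _ =>
      (W.valuation_le_one_iff x).1 (by
        simpa [map_inv₀] using inv_le_one_of_one_le₀ (h x⁻¹ (inv_ne_zero hx)))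

theorem isFractionRing_of_forall_exists_div {D : Subring F}
    (h : ∀ x : F, ∃ a ∈ D, ∃ b ∈ D, x = a / b) : IsFractionRing D F :=
  .of_field D F fun x => let ⟨a, ha, b, hb, hx⟩ := h x; ⟨⟨a, ha⟩, ⟨b, hb⟩, hx⟩

theorem isFractionRing_residuePullback (hW : W ≠ ⊤) (A : Subring (ResidueField W)) :
    IsFractionRing (residuePullback W A) F := by
  obtain ⟨t, ht0, ht⟩ := exists_valuation_lt_one hW
  have htA := mem_residuePullback_of_valuation_lt_one A ht
  have hmul {x : F} (hx : x ∈ W) : t * x ∈ residuePullback W A :=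
    mem_residuePullback_of_valuation_lt_one A <| by
      rw [map_mul]
      exact mul_lt_one_of_lt_of_le ht ((W.valuation_le_one_iff x).2 hx)
  refine isFractionRing_of_forall_exists_div fun x => ?_
  rcases W.mem_or_inv_mem x with hx | hx
  · exact ⟨t * x, hmul hx, t, htA, by field_simp⟩
  · exact ⟨t, htA, t * x⁻¹, hmul hx, by field_simp⟩

theorem inv_mem_of_valuation_eq_one {x : F} (hx : W.valuation x = 1) : x⁻¹ ∈ W := by
  rw [← W.valuation_le_one_iff, map_inv₀, hx, inv_one]

theorem residue_mk_inv {x : F} (hx : x ∈ W) (hxi : x⁻¹ ∈ W) :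
    residue W ⟨x⁻¹, hxi⟩ = (residue W ⟨x, hx⟩)⁻¹ := by
  rcases eq_or_ne x 0 with rfl | hx0
  · have h0 : residue W ⟨0, hx⟩ = 0 := map_zero _
    simp only [inv_zero, h0]
  · refine eq_inv_of_mul_eq_one_left ?_
    rw [← map_mul, ← map_one (residue W)]
    exact congrArg _ (Subtype.ext (inv_mul_cancel₀ hx0))

theorem inv_mem_residuePullback {k : Subfield (ResidueField W)} {x : F}
    (hx : x ∈ residuePullback W k.toSubring) (hv : W.valuation x = 1) :
    x⁻¹ ∈ residuePullback W k.toSubring := by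
  obtain ⟨hxW, hxk⟩ := mem_residuePullback.1 hx
  have hxi := inv_mem_of_valuation_eq_one hv
  exact mem_residuePullback.2 ⟨hxi, residue_mk_inv hxW hxi ▸ k.inv_mem hxk⟩

instance isLocalRing_residuePullback (k : Subfield (ResidueField W)) :
    IsLocalRing (residuePullback W k.toSubring) := by
  have isUnit_of_valuation_eq_one {x : residuePullback W k.toSubring}
      (hx : W.valuation (x : F) = 1) : IsUnit x :=
    .of_mul_eq_one ⟨_, inv_mem_residuePullback x.2 hx⟩ <| Subtype.ext <|
      mul_inv_cancel₀ fun h => by simp [h] at hx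
  refine .of_isUnit_or_isUnit_one_sub_self fun x => ?_
  rcases ((W.valuation_le_one_iff _).2 (residuePullback_le _ x.2)).lt_or_eq with hx | hx
  · exact .inr <| isUnit_of_valuation_eq_one <| by
      simpa using Valuation.map_one_sub_of_lt _ hx
  · exact .inl (isUnit_of_valuation_eq_one hx)

/-- The composite of a valuation ring `W` of `F` with a valuation ring of its residue field. -/
def compositeValuationSubring (W : ValuationSubring F) (U : ValuationSubring (ResidueField W)) :
    ValuationSubring F :=
  .ofSubring (residuePullback W U.toSubring) fun x => by
    by_cases hx : W.valuation x = 1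
    · have hxW : x ∈ W := (W.valuation_le_one_iff x).1 hx.le
      have hxi := inv_mem_of_valuation_eq_one hx
      refine (U.mem_or_inv_mem (residue W ⟨x, hxW⟩)).imp
        (fun h => mem_residuePullback.2 ⟨hxW, h⟩) fun h => mem_residuePullback.2 ⟨hxi, ?_⟩
      rwa [residue_mk_inv hxW hxi]
    · rcases lt_or_gt_of_ne hx with h | h
      · exact .inl (mem_residuePullback_of_valuation_lt_one _ h)
      · exact .inr (mem_residuePullback_of_valuation_lt_one _ (by
          rw [map_inv₀]; exact inv_lt_one_of_one_lt₀ h))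

theorem mem_compositeValuationSubring {U : ValuationSubring (ResidueField W)} {x : F} :
    x ∈ compositeValuationSubring W U ↔ ∃ h : x ∈ W, residue W ⟨x, h⟩ ∈ U :=
  mem_residuePullback

theorem residuePullback_le_compositeValuationSubring {A : Subring (ResidueField W)}
    {U : ValuationSubring (ResidueField W)} (h : A ≤ U.toSubring) :
    residuePullback W A ≤ (compositeValuationSubring W U).toSubring :=
  residuePullback_mono h

theorem ringKrullDim_add_one_le_compositeValuationSubring (hW : W ≠ ⊤)
    (U : ValuationSubring (ResidueField W)) :
    ringKrullDim U + 1 ≤ ringKrullDim (compositeValuationSubring W U) := by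
  let V := compositeValuationSubring W U
  have hVW : V ≤ W := fun _ hx => (mem_compositeValuationSubring.1 hx).1
  let g : V →+* U := ((residue W).comp (V.inclusion W hVW)).codRestrict U.toSubring
    fun x => (mem_compositeValuationSubring.1 x.2).2
  have hg : Function.Surjective g := by
    rintro ⟨u, hu⟩
    obtain ⟨x, rfl⟩ := residue_surjective u
    exact ⟨⟨x, mem_compositeValuationSubring.2 ⟨x.2, hu⟩⟩, rfl⟩
  obtain ⟨t, ht0, ht⟩ := exists_valuation_lt_one hW
  have htV : t ∈ V := mem_residuePullback_of_valuation_lt_one _ ht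
  refine ringKrullDim_succ_le_of_surjective g hg (r := ⟨t, htV⟩)
    (mem_nonZeroDivisors_of_ne_zero fun h => ht0 (congrArg Subtype.val h)) (Subtype.ext ?_)
  exact (residue_eq_zero_iff _).2 ((W.valuation_lt_one_iff ⟨t, hVW htV⟩).2 ht)

theorem exists_valuationSubring_of_notMem_residuePullback {A : Subring (ResidueField W)}
    [IsIntegrallyClosedIn A (ResidueField W)] {x : F} (hx : x ∉ residuePullback W A) :
    ∃ U : ValuationSubring F, residuePullback W A ≤ U.toSubring ∧ x ∉ U := by
  by_cases hxW : x ∈ W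
  · obtain ⟨U, hAU, hxU⟩ := Subring.exists_le_valuationSubring_of_isIntegrallyClosedIn
      fun h => hx (mem_residuePullback.2 ⟨hxW, h⟩)
    exact ⟨compositeValuationSubring W U, residuePullback_le_compositeValuationSubring hAU,
      fun h => hxU (mem_compositeValuationSubring.1 h).2⟩
  · exact ⟨W, residuePullback_le A, hxW⟩

end ResiduePullback

theorem exists_lt_le_coheight {α : Type*} [Preorder α] {a : α} {n : ℕ}
    (h : ((n + 1 : ℕ) : ℕ∞) ≤ Order.coheight a) : ∃ b, a < b ∧ (n : ℕ∞) ≤ Order.coheight b := by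
  by_contra! hlt
  exact (ENat.natCast_lt_natCast.2 n.lt_succ_self).not_ge
    (h.trans (Order.coheight_le_coe_iff.2 hlt))

theorem exists_le_coheight_of_le_krullDim {α : Type*} [Preorder α] {n : ℕ}
    (h : (n : WithBot ℕ∞) ≤ Order.krullDim α) : ∃ a : α, (n : ℕ∞) ≤ Order.coheight a := by
  obtain ⟨l, rfl⟩ := Order.le_krullDim_iff.1 h
  exact ⟨l.head, Order.length_le_coheight_head⟩

section DominatingChain

variable {A : Type*} [CommRing A]

theorem exists_ne_top_valuationSubring_ker_residue_eq {K : Type*} [Field K] (f : A →+* K)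
    {P Q : PrimeSpectrum A} (hP : RingHom.ker f ≤ P.asIdeal) (hPQ : P < Q) :
    ∃ (V : ValuationSubring K) (g : A →+* V), V ≠ ⊤ ∧ V.subtype.comp g = f ∧
      RingHom.ker ((residue V).comp g) = Q.asIdeal := by
  obtain ⟨V, g, hg, hker⟩ := exists_valuationSubring_ker_residue_eq f Q.asIdeal (hP.trans hPQ.le)
  refine ⟨V, g, ?_, hg, hker⟩
  rintro rfl
  obtain ⟨a, haQ, haP⟩ := SetLike.exists_of_lt (show P.asIdeal < Q.asIdeal from hPQ)
  have hfa : f a ≠ 0 := fun h => haP (hP h)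
  rw [← hg] at hfa
  rw [← hker, RingHom.mem_ker, RingHom.comp_apply, residue_eq_zero_iff, mem_maximalIdeal] at haQ
  exact haQ (.of_mul_eq_one ⟨_, trivial⟩ (Subtype.ext (mul_inv_cancel₀ hfa)))

theorem exists_valuationSubring_le_ringKrullDim (n : ℕ) {K : Type*} [Field K] (f : A →+* K)
    (P : PrimeSpectrum A) (hP : RingHom.ker f ≤ P.asIdeal) (hn : (n : ℕ∞) ≤ Order.coheight P) :
    ∃ V : ValuationSubring K, (∀ a, f a ∈ V) ∧ (n : WithBot ℕ∞) ≤ ringKrullDim V := by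
  induction n generalizing K P with
  | zero => exact ⟨⊤, fun _ => trivial, ringKrullDim_nonneg_of_nontrivial⟩
  | succ n ih =>
    obtain ⟨Q, hPQ, hQ⟩ := exists_lt_le_coheight hn
    obtain ⟨W, g, hW, rfl, hker⟩ := exists_ne_top_valuationSubring_ker_residue_eq f hP hPQ
    obtain ⟨U, hU, hdim⟩ := ih ((residue W).comp g) Q hker.le hQ
    refine ⟨compositeValuationSubring W U,
      fun a => mem_compositeValuationSubring.2 ⟨(g a).2, hU a⟩, ?_⟩
    push_cast
    exact (add_le_add_left hdim 1).trans (ringKrullDim_add_one_le_compositeValuationSubring hW U)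

theorem exists_valuationSubring_le_ringKrullDim_of_injective {K : Type*} [Field K] {f : A →+* K}
    (hf : Function.Injective f) {n : ℕ} (hn : (n : WithBot ℕ∞) ≤ ringKrullDim A) :
    ∃ V : ValuationSubring K, (∀ a, f a ∈ V) ∧ (n : WithBot ℕ∞) ≤ ringKrullDim V := by
  obtain ⟨P, hP⟩ := exists_le_coheight_of_le_krullDim hn
  exact exists_valuationSubring_le_ringKrullDim n f P
    (((RingHom.injective_iff_ker_eq_bot f).1 hf).trans_le bot_le) hP

theorem exists_valuationSubring_residueField_le_ringKrullDim {K : Type*} [Field K] {f : A →+* K}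
    (hf : Function.Injective f) {n : ℕ} (hn : ((n + 1 : ℕ) : WithBot ℕ∞) ≤ ringKrullDim A) :
    ∃ (W : ValuationSubring K) (g : A →+* W) (U : ValuationSubring (ResidueField W)),
      W ≠ ⊤ ∧ W.subtype.comp g = f ∧ (∀ a, residue W (g a) ∈ U) ∧
        (n : WithBot ℕ∞) ≤ ringKrullDim U := by
  obtain ⟨P, hP⟩ := exists_le_coheight_of_le_krullDim hn
  obtain ⟨Q, hPQ, hQ⟩ := exists_lt_le_coheight hP
  obtain ⟨W, g, hW, hg, hker⟩ := exists_ne_top_valuationSubring_ker_residue_eq f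
    (((RingHom.injective_iff_ker_eq_bot f).1 hf).trans_le bot_le) hPQ
  obtain ⟨U, hU, hdim⟩ :=
    exists_valuationSubring_le_ringKrullDim n ((residue W).comp g) Q hker.le hQ
  exact ⟨W, g, U, hW, hg, hU, hdim⟩

end DominatingChain

theorem ringKrullDim_le_valuativeDim (R : Type*) [CommRing R] [IsDomain R] :
    ringKrullDim R ≤ valuativeDim R := by
  refine iSup_le fun p => ?_
  obtain ⟨V, hRV, hV⟩ := exists_valuationSubring_le_ringKrullDim_of_injective
    (IsFractionRing.injective R (FractionRing R)) (Order.le_krullDim_iff.2 ⟨p, rfl⟩)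
  exact hV.trans (le_iSup_of_le ⟨V, Set.range_subset_iff.2 hRV⟩ le_rfl)

section Trdeg

universe u

open Algebra Cardinal

theorem transcendental_adjoin_of_map_eq_zero {E A B : Type*} [CommRing E] [CommRing A] [IsDomain A]
    [CommRing B] [Algebra E A] [Algebra E B] {f : A →ₐ[E] B} {ι : Type*} {x : ι → A}
    (hx : AlgebraicIndependent E (f ∘ x)) {a : A} (ha : a ≠ 0) (hfa : f a = 0) :
    Transcendental (adjoin E (Set.range x)) a := by
  have injective_on_adjoin {b : A} (hb : b ∈ adjoin E (Set.range x)) (hfb : f b = 0) : b = 0 := by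
    rw [adjoin_range_eq_range_aeval] at hb
    obtain ⟨p, rfl⟩ := hb
    have hp : p = 0 := hx <| by
      rw [map_zero, ← hfb]
      exact (MvPolynomial.comp_aeval_apply x f p).symm
    simp [hp]
  intro halg
  obtain ⟨q, hq0, hqa⟩ :=
    halg.exists_nonzero_coeff_and_aeval_eq_zero (mem_nonZeroDivisors_of_ne_zero ha)
  rw [← q.X_mul_divX_add, map_add, map_mul, Polynomial.aeval_X, Polynomial.aeval_C] at hqa
  have hcoeff : f (algebraMap (adjoin E (Set.range x)) A (q.coeff 0)) = 0 := by
    simpa only [map_add, map_mul, hfa, zero_mul, zero_add, map_zero] using congrArg f hqa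
  exact hq0 (Subtype.ext (injective_on_adjoin (q.coeff 0).2 hcoeff))

variable {E : Type*} [Field E]

theorem trdeg_add_one_le_of_surjective {A B : Type u} [CommRing A] [IsDomain A] [CommRing B]
    [IsDomain B] [Algebra E A] [Algebra E B] (f : A →ₐ[E] B) (hf : Function.Surjective f) {a : A}
    (ha : a ≠ 0) (hfa : f a = 0) : trdeg E B + 1 ≤ trdeg E A := by
  obtain ⟨ι, y, hy⟩ := exists_isTranscendenceBasis' E B
  choose x hx using fun i => hf (y i)
  obtain rfl : f ∘ x = y := funext hx
  have hindep : AlgebraicIndependent E (fun o : Option ι => o.elim a x) :=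
    AlgebraicIndependent.option_iff.2
      ⟨hy.1.of_comp f, transcendental_adjoin_of_map_eq_zero hy.1 ha hfa⟩
  rw [← hy.cardinalMk_eq_trdeg, ← mk_option]
  exact hindep.cardinalMk_le_trdeg

theorem le_trdeg_quotient_of_le_coheight {A : Type u} [CommRing A] [Algebra E A] (n : ℕ)
    (P : PrimeSpectrum A) (hn : (n : ℕ∞) ≤ Order.coheight P) :
    (n : Cardinal) ≤ trdeg E (A ⧸ P.asIdeal) := by
  induction n generalizing P with
  | zero => simp
  | succ n ih =>
    obtain ⟨Q, hPQ, hQ⟩ := exists_lt_le_coheight hn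
    obtain ⟨a, haQ, haP⟩ := SetLike.exists_of_lt (show P.asIdeal < Q.asIdeal from hPQ)
    have := trdeg_add_one_le_of_surjective (Ideal.Quotient.factorₐ E hPQ.le)
      (Ideal.Quotient.factor_surjective hPQ.le) (a := Ideal.Quotient.mk _ a)
      (mt Ideal.Quotient.eq_zero_iff_mem.1 haP) (Ideal.Quotient.eq_zero_iff_mem.2 haQ)
    push_cast
    exact (add_le_add_left (ih Q hQ) 1).trans this

theorem ringKrullDim_le_of_trdeg_le {A : Type u} [CommRing A] [Algebra E A] {r : ℕ}
    (h : trdeg E A ≤ r) : ringKrullDim A ≤ r := by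
  refine iSup_le fun p => ?_
  have hp := le_trdeg_quotient_of_le_coheight (E := E) p.length p.head
    Order.length_le_coheight_head
  exact_mod_cast hp.trans ((trdeg_le_of_surjective _ (Ideal.Quotient.mkₐ_surjective E _)).trans h)

end Trdeg

section Restriction

variable {K F : Type*} [Field K] [Field F] (φ : K →+* F) (V : ValuationSubring F)

/-- The homomorphism from the restriction of `V` along `φ` to `V`. -/
def restrictionHom : V.comap φ →+* V := φ.restrict (V.comap φ) V fun _ h => h

variable {V}

theorem restrictionHom_injective : Function.Injective (restrictionHom φ V) := fun _ _ h =>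
  Subtype.ext (φ.injective (congrArg Subtype.val h))

theorem isUnit_of_isUnit_restrictionHom {a : V.comap φ} (ha : IsUnit (restrictionHom φ V a)) :
    IsUnit a := by
  obtain ⟨b, hb⟩ := ha.exists_right_inv
  have hφ : φ a * b = 1 := congrArg Subtype.val hb
  have ha0 : (a : K) ≠ 0 := fun h => by simp [h] at hφ
  refine .of_mul_eq_one ⟨(a : K)⁻¹, ?_⟩ (Subtype.ext (mul_inv_cancel₀ ha0))
  rw [ValuationSubring.mem_comap, map_inv₀, ← eq_inv_of_mul_eq_one_right hφ]
  exact b.2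

theorem exists_dvd_of_mem_map_restrictionHom {p : Ideal (V.comap φ)} {v : V}
    (hv : v ∈ p.map (restrictionHom φ V)) : ∃ b ∈ p, restrictionHom φ V b ∣ v := by
  induction hv using Submodule.span_induction with
  | mem _ h => exact let ⟨b, hb, hbv⟩ := h; ⟨b, hb, hbv.dvd⟩
  | zero => exact ⟨0, p.zero_mem, dvd_zero _⟩
  | add _ _ _ _ hx hy =>
    obtain ⟨b, hb, hbx⟩ := hx
    obtain ⟨c, hc, hcy⟩ := hy
    rcases ValuationRing.dvd_total b c with h | h
    · exact ⟨b, hb, dvd_add hbx (((restrictionHom φ V).map_dvd h).trans hcy)⟩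
    · exact ⟨c, hc, dvd_add (((restrictionHom φ V).map_dvd h).trans hbx) hcy⟩
  | smul _ _ _ hx => exact let ⟨b, hb, hbx⟩ := hx; ⟨b, hb, hbx.mul_left _⟩

theorem comap_restrictionHom_surjective :
    Function.Surjective (PrimeSpectrum.comap (restrictionHom φ V)) := by
  intro p
  suffices h : (p.asIdeal.map (restrictionHom φ V)).comap (restrictionHom φ V) = p.asIdeal by
    obtain ⟨q, hq, hqp⟩ := (Ideal.comap_map_eq_self_iff_of_isPrime p.asIdeal).1 h
    exact ⟨⟨q, hq⟩, PrimeSpectrum.ext hqp⟩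
  refine Ideal.le_comap_map.antisymm' fun a ha => ?_
  obtain ⟨b, hb, hba⟩ := exists_dvd_of_mem_map_restrictionHom φ ha
  rcases ValuationRing.dvd_total b a with h | ⟨c, rfl⟩
  · exact p.asIdeal.mem_of_dvd h hb
  · rcases eq_or_ne a 0 with rfl | ha0
    · exact p.asIdeal.zero_mem
    · have hga : restrictionHom φ V a ≠ 0 := by
        simpa using (restrictionHom_injective φ).ne ha0
      have hc : IsUnit (restrictionHom φ V c) :=
        isUnit_of_dvd_one ((mul_dvd_mul_iff_left hga).1 (by rwa [mul_one, ← map_mul]))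
      exact (p.asIdeal.mul_unit_mem_iff_mem (isUnit_of_isUnit_restrictionHom φ hc)).1 hb

theorem ringKrullDim_comap_le (V : ValuationSubring F) :
    ringKrullDim (V.comap φ) ≤ ringKrullDim V := by
  choose lift hlift using comap_restrictionHom_surjective (V := V) φ
  refine Order.krullDim_le_of_strictMono lift fun p q hpq => ?_
  have not_le : ¬ (lift q).asIdeal ≤ (lift p).asIdeal := fun h => hpq.not_ge <| by
    rw [← hlift p, ← hlift q]
    exact Ideal.comap_mono h
  have htotal := (ValuationRing.le_total_ideal (A := V)).total (lift p).asIdeal (lift q).asIdeal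
  exact lt_of_le_not_ge (htotal.resolve_right not_le) not_le

theorem comap_restrictionHom_lt_of_notMem {p q : PrimeSpectrum V} (hpq : p ≤ q)
    {a : V.comap φ} (haq : restrictionHom φ V a ∈ q.asIdeal)
    (hap : restrictionHom φ V a ∉ p.asIdeal) :
    PrimeSpectrum.comap (restrictionHom φ V) p < PrimeSpectrum.comap (restrictionHom φ V) q :=
  lt_of_le_not_ge (Ideal.comap_mono hpq) fun h => hap (h haq)

theorem ringKrullDim_le_comap (h : ∀ f : F, ∃ a : K, V.valuation (φ a) = V.valuation f) :
    ringKrullDim V ≤ ringKrullDim (V.comap φ) := by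
  refine Order.krullDim_le_of_strictMono (PrimeSpectrum.comap (restrictionHom φ V))
    fun p q hpq => ?_
  obtain ⟨f, hfq, hfp⟩ := SetLike.exists_of_lt (show p.asIdeal < q.asIdeal from hpq)
  obtain ⟨a, ha⟩ := h f
  obtain ⟨u, hu⟩ := (V.valuation_eq_iff _ _).1 ha
  have haV : φ a ∈ V := hu ▸ V.mul_mem _ _ (u : V).2 f.2
  have hgen : restrictionHom φ V ⟨a, haV⟩ = u * f := Subtype.ext hu.symm
  refine comap_restrictionHom_lt_of_notMem φ hpq.le (a := ⟨a, haV⟩) ?_ ?_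
  · exact hgen ▸ q.asIdeal.mul_mem_left _ hfq
  · rwa [hgen, p.asIdeal.unit_mul_mem_iff_mem u.isUnit]

/-- `s` picks, for each step of a chain of primes of `V`, an element of the difference. -/
theorem exists_finite_le_ringKrullDim_comap {n : ℕ} (hn : (n : WithBot ℕ∞) ≤ ringKrullDim V) :
    ∃ s : Set F, s.Finite ∧ ∀ {K : Type*} [Field K] (φ : K →+* F), s ⊆ Set.range φ →
      (n : WithBot ℕ∞) ≤ ringKrullDim (V.comap φ) := by
  obtain ⟨p, rfl⟩ := Order.le_krullDim_iff.1 hn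
  choose f hfq hfp using fun i : Fin p.length =>
    SetLike.exists_of_lt (show (p i.castSucc).asIdeal < (p i.succ).asIdeal from p.step i)
  refine ⟨Set.range fun i => (f i : F), Set.finite_range _, fun φ hφ => ?_⟩
  choose a ha using fun i => hφ ⟨i, rfl⟩
  have haV (i) : φ (a i) ∈ V := ha i ▸ (f i).2
  have hgen (i) : restrictionHom φ V ⟨a i, haV i⟩ = f i := Subtype.ext (ha i)
  exact Order.le_krullDim_iff.2 ⟨{
    length := p.length
    toFun := fun i => PrimeSpectrum.comap (restrictionHom φ V) (p i)
    step := fun i => comap_restrictionHom_lt_of_notMem φ (p.step i).le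
      (hgen i ▸ hfq i) (hgen i ▸ hfp i) }, rfl⟩

end Restriction

theorem exists_valuationSubring_valuation_lt_one_iff {A K : Type*} [CommRing A] [Field K]
    (f : A →+* K) (P : Ideal A) [P.IsPrime] (hP : RingHom.ker f ≤ P) :
    ∃ V : ValuationSubring K, ∀ a, V.valuation (f a) ≤ 1 ∧ (V.valuation (f a) < 1 ↔ a ∈ P) := by
  obtain ⟨V, g, rfl, rfl⟩ := exists_valuationSubring_ker_residue_eq f P hP
  refine ⟨V, fun a => ⟨V.valuation_le_one (g a), ?_⟩⟩
  exact (V.valuation_lt_one_iff (g a)).symm.trans (residue_eq_zero_iff (g a)).symm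

theorem comap_eq_of_valuation_lt_one {K F : Type*} [Field K] [Field F] {φ : K →+* F}
    {U : ValuationSubring K} {V : ValuationSubring F} (hle : ∀ a ∈ U, φ a ∈ V)
    (hlt : ∀ a, U.valuation a < 1 → V.valuation (φ a) < 1) : V.comap φ = U := by
  refine le_antisymm (fun a ha => ?_) hle
  by_contra haU
  have hai : U.valuation a⁻¹ < 1 := by
    rw [map_inv₀]
    exact inv_lt_one_of_one_lt₀ (not_le.1 (mt (U.valuation_le_one_iff a).1 haU))
  rcases inv_lt_one_iff₀.1 (by simpa using hlt _ hai) with h0 | h1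
  · rw [le_zero_iff, map_eq_zero, map_eq_zero] at h0
    exact haU (h0 ▸ U.zero_mem)
  · exact h1.not_ge ((V.valuation_le_one_iff _).2 ha)

section GaussExtension

open MvPolynomial

variable {K F ι : Type*} [Field K] [Field F] [Algebra K F]

/-- Divide by a coefficient of largest value. -/
theorem exists_eq_C_mul_map_subtype (U : ValuationSubring K) {p : MvPolynomial ι K} (hp : p ≠ 0) :
    ∃ (a : K) (b : MvPolynomial ι U), p = C a * map U.subtype b ∧ map (residue U) b ≠ 0 := by
  obtain ⟨m, hm, hmax⟩ := p.support.exists_max_image (fun m => U.valuation (p.coeff m))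
    (support_nonempty.2 hp)
  have ha : p.coeff m ≠ 0 := mem_support_iff.1 hm
  have hcoeff (n) : (p.coeff m)⁻¹ * p.coeff n ∈ U := by
    have hle : U.valuation (p.coeff n) ≤ U.valuation (p.coeff m) := by
      by_cases hn : n ∈ p.support
      · exact hmax n hn
      · simp [notMem_support_iff.1 hn]
    rw [← U.valuation_le_one_iff, map_mul, map_inv₀, ← div_eq_inv_mul]
    exact div_le_one_of_le₀ hle zero_le
  obtain ⟨b, hb⟩ : C (p.coeff m)⁻¹ * p ∈ Set.range (map (σ := ι) U.subtype) := by
    rw [mem_range_map_iff_coeffs_subset]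
    intro y hy
    obtain ⟨n, -, rfl⟩ := mem_coeffs_iff.1 hy
    exact ⟨⟨_, hcoeff n⟩, (coeff_C_mul ..).symm⟩
  refine ⟨p.coeff m, b, ?_, fun h => ?_⟩
  · rw [hb, ← mul_assoc, ← C_mul, mul_inv_cancel₀ ha, C_1, one_mul]
  · have hbm : b.coeff m = 1 := Subtype.ext <| by
      change U.subtype (b.coeff m) = 1
      rw [← coeff_map, hb, coeff_C_mul, inv_mul_cancel₀ ha]
    simpa [coeff_map, hbm] using congrArg (coeff m) h

theorem exists_gaussExtension {x : ι → F} (hx : AlgebraicIndependent K x)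
    (hgen : IntermediateField.adjoin K (Set.range x) = ⊤) (U : ValuationSubring K) :
    ∃ V : ValuationSubring F, V.comap (algebraMap K F) = U ∧ (∀ i, V.valuation (x i) = 1) ∧
      ∀ f : F, ∃ a : K, V.valuation (algebraMap K F a) = V.valuation f := by
  let φ : MvPolynomial ι U →+* F :=
    (aeval x : MvPolynomial ι K →ₐ[K] F).toRingHom.comp (map U.subtype)
  let ψ : MvPolynomial ι U →+* MvPolynomial ι (ResidueField U) := map (residue U)
  have : (RingHom.ker ψ).IsPrime := RingHom.ker_isPrime ψ
  have hφ : Function.Injective φ :=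
    (show Function.Injective (aeval (R := K) x) from hx).comp
      (map_injective _ Subtype.val_injective)
  have hφC (a : U) : φ (C a) = algebraMap K F a := by simp [φ]
  obtain ⟨V, hV⟩ := exists_valuationSubring_valuation_lt_one_iff φ (RingHom.ker ψ)
    (((RingHom.injective_iff_ker_eq_bot φ).1 hφ).trans_le bot_le)
  have valuation_eq_one {b} (hb : ψ b ≠ 0) : V.valuation (φ b) = 1 :=
    (hV b).1.eq_of_not_lt (mt (hV b).2.1 hb)
  have exists_valuation_aeval (p : MvPolynomial ι K) :
      ∃ a : K, V.valuation (algebraMap K F a) = V.valuation (aeval x p) := by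
    by_cases hp : p = 0
    · exact ⟨0, by simp [hp]⟩
    · obtain ⟨a, b, rfl, hb⟩ := exists_eq_C_mul_map_subtype U hp
      have hb1 : V.valuation (aeval x (map U.subtype b)) = 1 := valuation_eq_one hb
      exact ⟨a, by rw [map_mul, map_mul, algHom_C, hb1, mul_one]⟩
  refine ⟨V, ?_, fun i => ?_, fun f => ?_⟩
  · refine comap_eq_of_valuation_lt_one (fun a ha => ?_) fun a ha => ?_
    · exact (V.valuation_le_one_iff _).1 (hφC ⟨a, ha⟩ ▸ (hV (C ⟨a, ha⟩)).1)
    · have haU : a ∈ U := (U.valuation_le_one_iff a).1 ha.le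
      have hres : residue U ⟨a, haU⟩ = 0 :=
        (residue_eq_zero_iff _).2 ((U.valuation_lt_one_iff ⟨a, haU⟩).2 ha)
      exact hφC ⟨a, haU⟩ ▸ (hV _).2.2 (by simp [ψ, RingHom.mem_ker, hres])
  · simpa [φ] using valuation_eq_one (b := X i) (by simp [ψ])
  · obtain ⟨p, q, rfl⟩ := (IntermediateField.mem_adjoin_range_iff K x f).1
      (hgen ▸ IntermediateField.mem_top)
    obtain ⟨a, ha⟩ := exists_valuation_aeval p
    obtain ⟨b, hb⟩ := exists_valuation_aeval q
    exact ⟨a / b, by simp [ha, hb]⟩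

theorem exists_gaussExtension_valuation_eq {x : ι → F} (hx : AlgebraicIndependent K x)
    (hgen : IntermediateField.adjoin K (Set.range x) = ⊤) (U : ValuationSubring K) (c : ι → Kˣ) :
    ∃ V : ValuationSubring F, V.comap (algebraMap K F) = U ∧
      (∀ i, V.valuation (x i) = V.valuation (algebraMap K F (c i))) ∧
      ∀ f : F, ∃ a : K, V.valuation (algebraMap K F a) = V.valuation f := by
  let y : ι → F := fun i => algebraMap K F (c i)⁻¹ * x i
  have hxy (i) : x i = algebraMap K F (c i) * y i := by simp [y]
  have hy : AlgebraicIndependent K y := by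
    have h := hx.polynomial_aeval_of_transcendental
      (f := fun i => Polynomial.C ((c i)⁻¹ : K) * Polynomial.X) fun i => Polynomial.transcendental _
        (by simp) (by simp)
    simpa [y] using h
  have hygen : IntermediateField.adjoin K (Set.range y) = ⊤ := by
    rw [← top_le_iff, ← hgen, IntermediateField.adjoin_le_iff]
    rintro _ ⟨i, rfl⟩
    rw [hxy]
    exact mul_mem (IntermediateField.algebraMap_mem _ _)
      (IntermediateField.subset_adjoin _ _ ⟨i, rfl⟩)
  obtain ⟨V, hVU, hV1, hVK⟩ := exists_gaussExtension hy hygen U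
  exact ⟨V, hVU, fun i => by rw [hxy, map_mul, hV1, mul_one], hVK⟩

end GaussExtension

section EssentialModel

variable {R K : Type*} [CommRing R] [Field K] [Algebra R K]

/-- The localization of `R` at `p`, as a subset of a field `K` over `R`. For `K = FractionRing R`
this is `locSet R p`. -/
def localizationIn (K : Type*) [Field K] [Algebra R K] (p : Ideal R) : Set K :=
  {x | ∃ a s : R, s ∉ p ∧ x = algebraMap R K a / algebraMap R K s}

theorem algEquiv_mem_localizationIn_iff {L : Type*} [Field L] [Algebra R L] (e : L ≃ₐ[R] K)
    {p : Ideal R} {x : L} : e x ∈ localizationIn K p ↔ x ∈ localizationIn L p := by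
  simp only [localizationIn, Set.mem_ofPred_eq, ← e.commutes, ← map_div₀, e.injective.eq_iff]

variable [IsDomain R] [IsFractionRing R K]

variable (R K) in
theorem isEssential_iff :
    IsEssential R ↔ ∃ Δ : Set (Ideal R), (∀ p ∈ Δ, p.IsPrime) ∧
      (∀ p ∈ Δ, ∀ x : K, x ∈ localizationIn K p ∨ x⁻¹ ∈ localizationIn K p) ∧
      Set.range (algebraMap R K) = ⋂ p ∈ Δ, localizationIn K p := by
  let e : FractionRing R ≃ₐ[R] K := FractionRing.algEquiv R K
  have hrange (x) : e x ∈ Set.range (algebraMap R K) ↔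
      x ∈ Set.range (algebraMap R (FractionRing R)) := by
    simp only [Set.mem_range, ← e.commutes, e.injective.eq_iff]
  refine exists_congr fun Δ => and_congr_right' (and_congr ?_ ?_)
  · refine forall₂_congr fun p _ => e.toEquiv.forall_congr fun x => ?_
    change _ ↔ e x ∈ _ ∨ (e x)⁻¹ ∈ _
    rw [← map_inv₀, algEquiv_mem_localizationIn_iff, algEquiv_mem_localizationIn_iff]
    rfl
  · rw [Set.ext_iff, Set.ext_iff]
    refine e.toEquiv.forall_congr fun x => ?_
    change _ ↔ (e x ∈ _ ↔ e x ∈ _)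
    simp only [hrange, Set.mem_iInter, algEquiv_mem_localizationIn_iff]
    rfl

theorem isEssential_of_ringEquiv {S : Type*} [CommRing S] [IsDomain S]
    (e : R ≃+* S) (h : IsEssential R) : IsEssential S := by
  let : Algebra R (FractionRing S) := ((algebraMap S (FractionRing S)).comp e).toAlgebra
  have : IsFractionRing R (FractionRing S) :=
    .of_ringEquiv_left e fun _ => rfl
  obtain ⟨Δ, hprime, hval, hinter⟩ := (isEssential_iff R (FractionRing S)).1 h
  have hloc (p : Ideal R) : localizationIn (FractionRing S) (p.comap e.symm) =
      localizationIn (FractionRing S) p := by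
    ext x
    refine ⟨?_, ?_⟩
    · rintro ⟨a, s, hs, rfl⟩
      refine ⟨e.symm a, e.symm s, hs, ?_⟩
      simp [RingHom.algebraMap_toAlgebra]
    · rintro ⟨a, s, hs, rfl⟩
      exact ⟨e a, e s, by simpa [Ideal.mem_comap] using hs, rfl⟩
  refine (isEssential_iff S (FractionRing S)).2 ⟨(fun p => p.comap e.symm) '' Δ, ?_, ?_, ?_⟩
  · rintro _ ⟨p, hp, rfl⟩
    have := hprime p hp
    exact Ideal.comap_isPrime e.symm p
  · rintro _ ⟨p, hp, rfl⟩
    simpa only [hloc] using hval p hp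
  · simp only [Set.biInter_image, hloc, ← hinter]
    exact (e.surjective.range_comp _).symm

theorem valuativeDim_le {d : WithBot ℕ∞}
    (h : ∀ V : ValuationSubring K, (∀ a, algebraMap R K a ∈ V) → ringKrullDim V ≤ d) :
    valuativeDim R ≤ d := by
  refine iSup_le fun ⟨W, hW⟩ => ?_
  let e : FractionRing R ≃ₐ[R] K := FractionRing.algEquiv R K
  have hcomap : (W.comap (e.symm : K →+* FractionRing R)).comap (e : FractionRing R →+* K) = W := by
    ext x
    simp
  change ringKrullDim W ≤ d
  rw [← hcomap]
  refine (ringKrullDim_comap_le _ _).trans (h _ fun a => ?_)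
  simpa using hW ⟨a, rfl⟩

end EssentialModel

section NotEssential

variable {F : Type*} [Field F] {W : ValuationSubring F}

theorem not_isEssential_residuePullback (hW : W ≠ ⊤) {k : Subfield (ResidueField W)}
    (hk : k ≠ ⊤) : ¬ IsEssential (residuePullback W k.toSubring) := by
  have := isFractionRing_residuePullback hW k.toSubring
  rw [isEssential_iff _ F]
  rintro ⟨Δ, -, hval, hinter⟩
  obtain ⟨r, hr⟩ : ∃ r, r ∉ k := by simpa [SetLike.ext_iff] using hk
  obtain ⟨u, rfl⟩ := residue_surjective r
  have hu : (u : F) ∉ residuePullback W k.toSubring := fun h => hr (mem_residuePullback.1 h).2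
  have hvu : W.valuation (u : F) = 1 := (W.valuation_eq_one_iff u).1 <| by
    by_contra h
    exact hr ((residue_eq_zero_iff u).2 h ▸ k.zero_mem)
  suffices h : (u : F) ∈ ⋂ p ∈ Δ, localizationIn F p by
    obtain ⟨a, ha⟩ := hinter ▸ h
    exact hu (ha ▸ a.2)
  refine Set.mem_iInter₂.2 fun p hp => ?_
  by_cases hz : ∃ z ∉ p, W.valuation (z : F) < 1
  · obtain ⟨z, hzp, hvz⟩ := hz
    have hz0 : (z : F) ≠ 0 := fun h => hzp (ZeroMemClass.coe_eq_zero.1 h ▸ p.zero_mem)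
    have huz : (u : F) * z ∈ residuePullback W k.toSubring :=
      mem_residuePullback_of_valuation_lt_one _ (by rwa [map_mul, hvu, one_mul])
    exact ⟨⟨_, huz⟩, z, hzp, (mul_div_cancel_right₀ _ hz0).symm⟩
  · push Not at hz
    have localizationIn_subset : localizationIn F p ⊆ residuePullback W k.toSubring := by
      rintro _ ⟨a, s, hs, rfl⟩
      have hvs := ((W.valuation_le_one_iff _).2 (residuePullback_le _ s.2)).antisymm (hz s hs)
      exact div_eq_mul_inv (a : F) s ▸ mul_mem a.2 (inv_mem_residuePullback s.2 hvs)
    refine (hval p hp u).resolve_right fun h => hu ?_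
    exact inv_inv (u : F) ▸ inv_mem_residuePullback (localizationIn_subset h) (by simp [hvu])

end NotEssential

section Center

variable {F : Type*} [Field F] {D A : Subring F}

/-- Every element of `A` is a fraction `d / s` with `d, s ∈ D` and `s` invertible in `A`. When
`D ≤ A`, this means that `A` is a localization of `D`. -/
def HasUnitDenominators (D A : Subring F) : Prop :=
  ∀ a ∈ A, ∃ s ∈ D, s ≠ 0 ∧ s⁻¹ ∈ A ∧ s * a ∈ D

theorem HasUnitDenominators.isFractionRing [IsFractionRing A F] (hden : HasUnitDenominators D A) :
    IsFractionRing D F := by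
  refine isFractionRing_of_forall_exists_div fun x => ?_
  obtain ⟨a, b, -, rfl⟩ := IsFractionRing.div_surjective A x
  obtain ⟨s, hs, hs0, -, hsa⟩ := hden a a.2
  obtain ⟨t, ht, ht0, -, htb⟩ := hden b b.2
  refine ⟨t * (s * a), D.mul_mem ht hsa, s * (t * b), D.mul_mem hs htb, ?_⟩
  change (a : F) / b = _
  rw [mul_left_comm t s, mul_div_mul_left _ _ hs0, mul_div_mul_left _ _ ht0]

theorem isUnit_subring_iff {a : A} : IsUnit a ↔ (a : F) ≠ 0 ∧ (a : F)⁻¹ ∈ A := by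
  refine ⟨fun h => ?_, fun h => .of_mul_eq_one ⟨_, h.2⟩ (Subtype.ext (mul_inv_cancel₀ h.1))⟩
  obtain ⟨b, hb⟩ := h.exists_right_inv
  have hab : (a : F) * b = 1 := congrArg Subtype.val hb
  exact ⟨left_ne_zero_of_mul_eq_one hab, eq_inv_of_mul_eq_one_right hab ▸ b.2⟩

variable [IsLocalRing A]

theorem inv_mem_or_inv_mem_of_add_eq {a b c : F} (ha : a ∈ A) (hb : b ∈ A) (hab : a + b = c)
    (hc0 : c ≠ 0) (hc : c⁻¹ ∈ A) : a⁻¹ ∈ A ∨ b⁻¹ ∈ A := by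
  subst hab
  have hunit : IsUnit ((⟨a, ha⟩ : A) + ⟨b, hb⟩) := isUnit_subring_iff.2 ⟨hc0, hc⟩
  exact (IsLocalRing.isUnit_or_isUnit_of_isUnit_add hunit).imp
    (fun h => (isUnit_subring_iff.1 h).2) fun h => (isUnit_subring_iff.1 h).2

/-- The center on a subring `D` of a local ring `A` containing `D`. -/
def center (hDA : D ≤ A) : Ideal D := (maximalIdeal A).comap (Subring.inclusion hDA)

instance isPrime_center (hDA : D ≤ A) : (center hDA).IsPrime := Ideal.comap_isPrime _ _

theorem notMem_center_iff {hDA : D ≤ A} {s : D} :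
    s ∉ center hDA ↔ (s : F) ≠ 0 ∧ (s : F)⁻¹ ∈ A := by
  rw [center, Ideal.mem_comap, mem_maximalIdeal, mem_nonunits_iff, not_not]
  exact isUnit_subring_iff

theorem localizationIn_center (hDA : D ≤ A) (hden : HasUnitDenominators D A) :
    localizationIn F (center hDA) = A := by
  ext x
  constructor
  · rintro ⟨a, s, hs, rfl⟩
    exact div_eq_mul_inv (a : F) s ▸ A.mul_mem (hDA a.2) (notMem_center_iff.1 hs).2
  · intro hx
    obtain ⟨s, hs, hs0, hsA, hsx⟩ := hden x hx
    exact ⟨⟨_, hsx⟩, ⟨s, hs⟩, notMem_center_iff.2 ⟨hs0, hsA⟩, (mul_div_cancel_left₀ x hs0).symm⟩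

theorem isLocalization_center (hDA : D ≤ A) (hden : HasUnitDenominators D A) :
    letI := (Subring.inclusion hDA).toAlgebra
    IsLocalization.AtPrime A (center hDA) := by
  let := (Subring.inclusion hDA).toAlgebra
  refine ⟨fun s => ?_, fun x => ?_, fun {a b} hab => ⟨1, ?_⟩⟩
  · exact not_not.1 s.2
  · obtain ⟨s, hs, hs0, hsA, hsx⟩ := hden x x.2
    exact ⟨⟨⟨_, hsx⟩, ⟨s, hs⟩, notMem_center_iff.2 ⟨hs0, hsA⟩⟩, Subtype.ext (mul_comm _ _)⟩
  · rw [Subring.inclusion_injective hDA hab]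

theorem nonempty_localization_center_ringEquiv (hDA : D ≤ A) (hden : HasUnitDenominators D A) :
    Nonempty (Localization.AtPrime (center hDA) ≃+* A) :=
  let := (Subring.inclusion hDA).toAlgebra
  have := isLocalization_center hDA hden
  ⟨(Localization.algEquiv (center hDA).primeCompl A).toRingEquiv⟩

theorem ringKrullDim_le_of_hasUnitDenominators (hDA : D ≤ A)
    (hden : HasUnitDenominators D A) : ringKrullDim A ≤ ringKrullDim D := by
  let := (Subring.inclusion hDA).toAlgebra
  have := isLocalization_center hDA hden
  rw [IsLocalization.AtPrime.ringKrullDim_eq_height (center hDA) A]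
  exact Ideal.height_le_ringKrullDim_of_isPrime

theorem isEssential_iInf {ι : Type*} {V : ι → ValuationSubring F}
    [IsFractionRing (⨅ i, (V i).toSubring : Subring F) F]
    (hden : ∀ i, HasUnitDenominators (⨅ j, (V j).toSubring) (V i).toSubring) :
    IsEssential (⨅ i, (V i).toSubring : Subring F) := by
  have (i : ι) : IsLocalRing (V i).toSubring := inferInstanceAs (IsLocalRing (V i))
  let c (i : ι) : Ideal (⨅ j, (V j).toSubring : Subring F) :=
    center (iInf_le (fun j => (V j).toSubring) i)
  have hc (i : ι) : localizationIn F (c i) = V i := localizationIn_center _ (hden i)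
  refine (isEssential_iff _ F).2 ⟨Set.range c, ?_, ?_, ?_⟩
  · rintro _ ⟨i, rfl⟩
    infer_instance
  · rintro _ ⟨i, rfl⟩ x
    rw [hc]
    exact (V i).mem_or_inv_mem x
  · simp only [Set.biInter_range, hc]
    exact Subtype.range_coe.trans Subring.coe_iInf

end Center

section SeparatedSystem

variable {F ι : Type*} [Field F] {R : Subring F} {V : ι → ValuationSubring F} {X : ι → Set F}

/-- A family of valuation rings `V i` of `F`, almost all of which contain any given element of the
subring `R`, together with sets `X i` of units of `R` which realise all values of `V i` and are
negligible for the other `V m`. The last condition makes the sum of elements of `X i` and `X j` a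
unit at every `V m` at which neither of them is small. -/
structure IsSeparatedSystem (R : Subring F) (V : ι → ValuationSubring F) (X : ι → Set F) :
    Prop where
  iInf_le : ⨅ i, (V i).toSubring ≤ R
  finite_notMem : ∀ h ∈ R, {i | h ∉ V i}.Finite
  ne_zero : ∀ i, ∀ x ∈ X i, x ≠ 0
  mem : ∀ i, ∀ x ∈ X i, x ∈ R
  inv_mem : ∀ i, ∀ x ∈ X i, x⁻¹ ∈ R
  exists_valuation_eq : ∀ i, ∀ f ≠ 0, ∃ x ∈ X i, (V i).valuation x = (V i).valuation f
  valuation_eq_one : ∀ i m, i ≠ m → ∀ x ∈ X i, (V m).valuation x = 1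
  valuation_add_eq_one : ∀ i j m, i ≠ j → i ≠ m → j ≠ m → ∀ x ∈ X i, ∀ y ∈ X j,
    (V m).valuation (x + y) = 1

theorem valuation_eq_one_of_inv_mem {U : ValuationSubring F} {x : F} (h0 : x ≠ 0) (hx : x ∈ U)
    (hxi : x⁻¹ ∈ U) : U.valuation x = 1 :=
  (U.valuation_eq_one_iff ⟨x, hx⟩).1
    (.of_mul_eq_one ⟨_, hxi⟩ (Subtype.ext (mul_inv_cancel₀ h0)))

theorem valuation_add_eq_one_of_lt_one {U : ValuationSubring F} {x y : F}
    (hx : U.valuation x = 1) (hy : U.valuation y < 1) : U.valuation (x + y) = 1 :=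
  hx ▸ Valuation.map_add_eq_of_lt_left _ (hx ▸ hy)

theorem ne_zero_of_valuation_eq_one {U : ValuationSubring F} {x : F} (hx : U.valuation x = 1) :
    x ≠ 0 := fun h => by simp [h] at hx

theorem mem_of_mul_mem {U : ValuationSubring F} {s x : F} (hs : U.valuation s = 1)
    (hsx : s * x ∈ U) : x ∈ U := by
  rwa [← U.valuation_le_one_iff, map_mul, hs, one_mul, U.valuation_le_one_iff] at hsx

theorem mem_iInf_of_valuation_eq_one {x : F} (i : ι) (hi : x ∈ V i)
    (h : ∀ m, i ≠ m → (V m).valuation x = 1) : x ∈ ⨅ m, (V m).toSubring :=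
  Subring.mem_iInf.2 fun m => by
    rcases eq_or_ne i m with rfl | him
    · exact hi
    · exact ((V m).valuation_le_one_iff x).1 (h m him).le

theorem inv_mem_iInf_of_valuation_eq_one {x : F} (h : ∀ m, (V m).valuation x = 1) :
    x⁻¹ ∈ ⨅ m, (V m).toSubring :=
  Subring.mem_iInf.2 fun m => inv_mem_of_valuation_eq_one (h m)

namespace IsSeparatedSystem

variable (hV : IsSeparatedSystem R V X)
include hV

theorem valuation_prod_of_notMem {S : Finset ι} {x : ι → F} (hx : ∀ j ∈ S, x j ∈ X j) {m : ι}
    (hm : m ∉ S) : (V m).valuation (∏ j ∈ S, x j) = 1 := by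
  rw [map_prod]
  exact Finset.prod_eq_one fun j hj =>
    hV.valuation_eq_one j m (fun hjm => hm (hjm ▸ hj)) _ (hx j hj)

theorem valuation_prod_of_mem {S : Finset ι} {x : ι → F} (hx : ∀ j ∈ S, x j ∈ X j) {m : ι}
    (hm : m ∈ S) : (V m).valuation (∏ j ∈ S, x j) = (V m).valuation (x m) := by
  rw [map_prod]
  exact Finset.prod_eq_single_of_mem m hm fun j hj hjm =>
    hV.valuation_eq_one j m hjm _ (hx j hj)

/-- The denominator `s` is the product, over the finitely many `j` with `h ∉ V j`, of an element of
`X j` with the value of `h⁻¹`. -/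
theorem exists_denominator {h : F} (hR : h ∈ R) :
    ∃ s ∈ ⨅ i, (V i).toSubring, s⁻¹ ∈ R ∧ s * h ∈ ⨅ i, (V i).toSubring ∧
      ∀ U : ValuationSubring F, (∀ j, h ∉ V j → ∀ x ∈ X j, x ∈ V j → U.valuation x = 1) →
        U.valuation s = 1 := by
  classical
  have hvalue (j : ι) (hj : h ∉ V j) : ∃ x ∈ X j, (V j).valuation x = (V j).valuation h⁻¹ :=
    hV.exists_valuation_eq j _ (inv_ne_zero fun h0 => hj (h0 ▸ (V j).zero_mem))
  choose! x hxX hvx using hvalue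
  have hx (j : ι) (hj : h ∉ V j) : x j ∈ V j := by
    rw [← (V j).valuation_le_one_iff, hvx j hj, (V j).valuation_le_one_iff]
    exact ((V j).mem_or_inv_mem h).resolve_left hj
  let S := (hV.finite_notMem h hR).toFinset
  have hS {j : ι} : j ∈ S ↔ h ∉ V j := Set.Finite.mem_toFinset _
  have hSX (j : ι) (hj : j ∈ S) : x j ∈ X j := hxX j (hS.1 hj)
  refine ⟨∏ j ∈ S, x j, Subring.mem_iInf.2 fun m => ?_, ?_, Subring.mem_iInf.2 fun m => ?_,
    fun U hU => ?_⟩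
  · refine ((V m).valuation_le_one_iff _).1 ?_
    by_cases hm : m ∈ S
    · exact hV.valuation_prod_of_mem hSX hm ▸ ((V m).valuation_le_one_iff _).2 (hx m (hS.1 hm))
    · exact (hV.valuation_prod_of_notMem hSX hm).le
  · rw [← Finset.prod_inv_distrib]
    exact R.prod_mem fun j hj => hV.inv_mem j _ (hSX j hj)
  · refine ((V m).valuation_le_one_iff _).1 ?_
    rw [map_mul]
    by_cases hm : m ∈ S
    · have h0 : h ≠ 0 := fun h0 => hS.1 hm (h0 ▸ (V m).zero_mem)
      rw [hV.valuation_prod_of_mem hSX hm, hvx m (hS.1 hm), ← map_mul, inv_mul_cancel₀ h0, map_one]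
    · rw [hV.valuation_prod_of_notMem hSX hm, one_mul, (V m).valuation_le_one_iff]
      exact not_not.1 (mt hS.2 hm)
  · rw [map_prod]
    exact Finset.prod_eq_one fun j hj => hU j (hS.1 hj) _ (hSX j hj) (hx j (hS.1 hj))

theorem le_of_forall_valuation_eq_one {U : ValuationSubring F}
    (hU : ⨅ i, (V i).toSubring ≤ U.toSubring)
    (h : ∀ j, ∀ x ∈ X j, x ∈ V j → U.valuation x = 1) : R ≤ U.toSubring := fun _ ha =>
  let ⟨_, _, _, hsa, hs⟩ := hV.exists_denominator ha
  mem_of_mul_mem (hs U fun j _ => h j) (hU hsa)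

theorem hasUnitDenominators : HasUnitDenominators (⨅ i, (V i).toSubring) R := fun _ ha =>
  let ⟨s, hsD, hsR, hsa, hs⟩ := hV.exists_denominator ha
  ⟨s, hsD, ne_zero_of_valuation_eq_one (hs ⊤ fun j _ x hx _ =>
    valuation_eq_one_of_inv_mem (hV.ne_zero j x hx) trivial trivial), hsR, hsa⟩

theorem exists_denominator_valuation_eq_one {i : ι} {h : F} (hR : h ∈ R) (hi : h ∈ V i) :
    ∃ s ∈ ⨅ i, (V i).toSubring, s * h ∈ ⨅ i, (V i).toSubring ∧ (V i).valuation s = 1 :=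
  let ⟨s, hsD, _, hsh, hs⟩ := hV.exists_denominator hR
  ⟨s, hsD, hsh, hs (V i) fun j hj x hx _ =>
    hV.valuation_eq_one j i (fun hji => hj (hji ▸ hi)) x hx⟩

theorem exists_eq_div [IsFractionRing R F] {i : ι} {v : F} (hv : v ∈ V i) :
    ∃ a ∈ R, ∃ b ∈ R, a ∈ V i ∧ (V i).valuation b = 1 ∧ v = a / b := by
  obtain ⟨a, b, hb, rfl⟩ := IsFractionRing.div_surjective R v
  have hb0 : (b : F) ≠ 0 := ZeroMemClass.coe_eq_zero.not.2 (nonZeroDivisors.ne_zero hb)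
  obtain ⟨x, hx, hvx⟩ := hV.exists_valuation_eq i _ hb0
  have hx0 := hV.ne_zero i x hx
  have hxi := hV.inv_mem i x hx
  have hbx : (V i).valuation ((b : F) * x⁻¹) = 1 := by
    rw [map_mul, ← hvx, ← map_mul, mul_inv_cancel₀ hx0, map_one]
  refine ⟨a * x⁻¹, R.mul_mem a.2 hxi, b * x⁻¹, R.mul_mem b.2 hxi, ?_, hbx,
    (mul_div_mul_right _ _ (inv_ne_zero hx0)).symm⟩
  have hab : (a : F) * x⁻¹ = (b * x⁻¹) * (a / b) := by field_simp
  exact hab ▸ (V i).mul_mem _ _ (((V i).valuation_le_one_iff _).1 hbx.le) hv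

theorem hasUnitDenominators_valuationSubring [IsFractionRing R F] (i : ι) :
    HasUnitDenominators (⨅ i, (V i).toSubring) (V i).toSubring := by
  intro v hv
  obtain ⟨a, haR, b, hbR, hai, hvb, rfl⟩ := hV.exists_eq_div hv
  obtain ⟨s, hs, hsa, hvs⟩ := hV.exists_denominator_valuation_eq_one haR hai
  obtain ⟨t, ht, htb, hvt⟩ :=
    hV.exists_denominator_valuation_eq_one hbR (((V i).valuation_le_one_iff b).1 hvb.le)
  have hb0 := ne_zero_of_valuation_eq_one hvb
  have hstb : (V i).valuation (s * (t * b)) = 1 := by simp [hvs, hvt, hvb]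
  refine ⟨s * (t * b), mul_mem hs htb, ne_zero_of_valuation_eq_one hstb,
    inv_mem_of_valuation_eq_one hstb, ?_⟩
  have hsplit : s * (t * b) * (a / b) = t * (s * a) := by field_simp
  exact hsplit ▸ mul_mem ht hsa

theorem isEssential [IsFractionRing R F] :
    IsEssential (⨅ i, (V i).toSubring : Subring F) :=
  have := hV.hasUnitDenominators.isFractionRing
  isEssential_iInf hV.hasUnitDenominators_valuationSubring

section Dichotomy

variable {U : ValuationSubring F} (hU : ⨅ i, (V i).toSubring ≤ U.toSubring) {i : ι} {x : F}
  (hx : x ∈ X i) (hxi : x ∈ V i) (hvx : U.valuation x < 1)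
include hU hx hxi hvx

theorem valuation_lt_one_of_mem : (V i).valuation x < 1 := by
  refine (((V i).valuation_le_one_iff x).2 hxi).lt_of_ne fun h => hvx.ne ?_
  have hone (m : ι) : (V m).valuation x = 1 := by
    rcases eq_or_ne i m with rfl | him
    exacts [h, hV.valuation_eq_one i m him x hx]
  exact valuation_eq_one_of_inv_mem (hV.ne_zero i x hx)
    (hU (mem_iInf_of_valuation_eq_one i hxi fun m him => hV.valuation_eq_one i m him x hx))
    (hU (inv_mem_iInf_of_valuation_eq_one hone))

/-- If neither `x` nor `y` were a unit of `U`, then `x + y` would not be one either; but `x + y` is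
a unit of every `V m`. -/
theorem valuation_eq_one_of_ne {j : ι} (hij : i ≠ j) {y : F} (hy : y ∈ X j) (hyj : y ∈ V j) :
    U.valuation y = 1 := by
  have hxlt := hV.valuation_lt_one_of_mem hU hx hxi hvx
  have hyU : y ∈ U := hU
    (mem_iInf_of_valuation_eq_one j hyj fun m hjm => hV.valuation_eq_one j m hjm y hy)
  refine (((U.valuation_le_one_iff y).2 hyU).lt_or_eq).resolve_left fun hvy => ?_
  have hylt := hV.valuation_lt_one_of_mem hU hy hyj hvy
  have hadd (m : ι) : (V m).valuation (x + y) = 1 := by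
    rcases eq_or_ne i m with rfl | him
    · exact add_comm y x ▸
        valuation_add_eq_one_of_lt_one (hV.valuation_eq_one j i hij.symm y hy) hxlt
    rcases eq_or_ne j m with rfl | hjm
    · exact valuation_add_eq_one_of_lt_one (hV.valuation_eq_one i j hij x hx) hylt
    · exact hV.valuation_add_eq_one i j m hij him hjm x hx y hy
  have hinv := (U.valuation_le_one_iff _).2 (hU (inv_mem_iInf_of_valuation_eq_one hadd))
  rw [map_inv₀] at hinv
  exact hinv.not_gt ((one_lt_inv₀ (zero_lt_iff.2 ((U.valuation.ne_zero_iff).2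
    (ne_zero_of_valuation_eq_one (hadd i))))).2 (Valuation.map_add_lt _ hvx hvy))

theorem mem_of_mem_of_mem {h : F} (hR : h ∈ R) (hi : h ∈ V i) : h ∈ U := by
  obtain ⟨s, -, -, hsh, hs⟩ := hV.exists_denominator hR
  refine mem_of_mul_mem (hs U fun j hj y hy hyj => ?_) (hU hsh)
  exact hV.valuation_eq_one_of_ne hU hx hxi hvx (by rintro rfl; exact hj hi) hy hyj

/-- For a denominator `s`, either `s` or `s + x` is a unit of the local ring `R`, because `x` is. -/
theorem le_of_valuation_lt_one [IsLocalRing R] [IsFractionRing R F] : V i ≤ U := by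
  intro v hv
  obtain ⟨s, hsD, hs0, hsi, hsv⟩ := hV.hasUnitDenominators_valuationSubring i v hv
  have hsU : s ∈ U := hU hsD
  have hsR := hV.iInf_le hsD
  have hvs : (V i).valuation s = 1 :=
    valuation_eq_one_of_inv_mem hs0 (Subring.mem_iInf.1 hsD i) hsi
  have hxR := hV.mem i x hx
  suffices h : U.valuation s = 1 from mem_of_mul_mem h (hU hsv)
  rcases inv_mem_or_inv_mem_of_add_eq (R.add_mem hsR hxR) (R.neg_mem hsR)
    (add_neg_cancel_comm s x) (hV.ne_zero i x hx) (hV.inv_mem i x hx) with h | h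
  · have hvsx : (V i).valuation (s + x) = 1 :=
      valuation_add_eq_one_of_lt_one hvs (hV.valuation_lt_one_of_mem hU hx hxi hvx)
    have hUsx : U.valuation (s + x) = 1 :=
      valuation_eq_one_of_inv_mem (ne_zero_of_valuation_eq_one hvsx)
        (U.add_mem _ _ hsU ((U.valuation_le_one_iff x).1 hvx.le))
        (hV.mem_of_mem_of_mem hU hx hxi hvx h (inv_mem_of_valuation_eq_one hvsx))
    exact add_neg_cancel_right s x ▸
      valuation_add_eq_one_of_lt_one hUsx (U.valuation.map_neg x ▸ hvx)
  · rw [inv_neg] at h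
    exact valuation_eq_one_of_inv_mem hs0 hsU
      (hV.mem_of_mem_of_mem hU hx hxi hvx (neg_mem_iff.1 h) hsi)

end Dichotomy

theorem le_or_exists_le [IsLocalRing R] [IsFractionRing R F] {U : ValuationSubring F}
    (hU : ⨅ i, (V i).toSubring ≤ U.toSubring) : R ≤ U.toSubring ∨ ∃ i, V i ≤ U := by
  by_cases! h : ∀ j, ∀ x ∈ X j, x ∈ V j → U.valuation x = 1
  · exact .inl (hV.le_of_forall_valuation_eq_one hU h)
  · obtain ⟨i, x, hx, hxi, hvx⟩ := h
    refine .inr ⟨i, hV.le_of_valuation_lt_one hU hx hxi (lt_of_le_of_ne ?_ hvx)⟩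
    exact (U.valuation_le_one_iff x).2 (hU
      (mem_iInf_of_valuation_eq_one i hxi fun m him => hV.valuation_eq_one i m him x hx))

end IsSeparatedSystem

end SeparatedSystem

section Overrings

variable {F : Type*} [Field F]

theorem hasUnitDenominators_of_le {V U : ValuationSubring F} :
    HasUnitDenominators V.toSubring U.toSubring := by
  intro a ha
  rcases V.mem_or_inv_mem a with h | h
  · exact ⟨1, V.one_mem, one_ne_zero, by simp, by simpa using h⟩
  · rcases eq_or_ne a 0 with rfl | ha0
    · exact ⟨1, V.one_mem, one_ne_zero, by simp, by simp⟩
    · exact ⟨a⁻¹, h, inv_ne_zero ha0, (inv_inv a).symm ▸ ha,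
        (inv_mul_cancel₀ ha0).symm ▸ V.one_mem⟩

theorem ringKrullDim_le_of_le {V U : ValuationSubring F} (h : V ≤ U) :
    ringKrullDim U ≤ ringKrullDim V :=
  have : IsLocalRing U.toSubring := inferInstanceAs (IsLocalRing U)
  ringKrullDim_le_of_hasUnitDenominators (D := V.toSubring) (A := U.toSubring) h
    hasUnitDenominators_of_le

theorem ringKrullDim_le_of_algebraMap_mem {E : Type*} [Field E] [Algebra E F] {r : ℕ}
    (h : Algebra.trdeg E F ≤ r) {U : ValuationSubring F} (hU : ∀ e, algebraMap E F e ∈ U) :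
    ringKrullDim U ≤ r := by
  let : Algebra E U := ((algebraMap E F).codRestrict U.toSubring hU).toAlgebra
  let f : U →ₐ[E] F := { U.subtype with commutes' := fun _ => rfl }
  exact ringKrullDim_le_of_trdeg_le ((trdeg_le_of_injective f Subtype.val_injective).trans h)

theorem algebraicClosure_toSubring_le {E : Type*} [Field E] [Algebra E F] {U : ValuationSubring F}
    (hU : ∀ e, algebraMap E F e ∈ U) :
    (algebraicClosure E F).toSubfield.toSubring ≤ U.toSubring :=
  have : IsIntegrallyClosedIn U.toSubring F := inferInstanceAs (IsIntegrallyClosedIn U F)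
  Subring.integralClosure_le_iff.2 hU

/-- `R` is the preimage of the algebraic closure of `E` in the residue field of a valuation ring
`W` of `F`, where `W` and a proper valuation ring of its residue field come from a chain of primes
of `A`. -/
theorem exists_isLocalRing_not_isEssential {E A : Type*} [Field E] [CommRing A] [Algebra E A]
    [Algebra E F] {f : A →ₐ[E] F} (hf : Function.Injective f) {r : ℕ} (hr : 2 ≤ r)
    (hA : r ≤ ringKrullDim A) :
    ∃ (R : Subring F) (U : ValuationSubring F), IsLocalRing R ∧ IsFractionRing R F ∧
      ¬ IsEssential R ∧ (∀ e, algebraMap E F e ∈ R) ∧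
      (∀ x ∉ R, ∃ V : ValuationSubring F, R ≤ V.toSubring ∧ x ∉ V) ∧
      R ≤ U.toSubring ∧ r ≤ ringKrullDim U := by
  obtain ⟨n, rfl⟩ : ∃ n, r = n + 1 := ⟨r - 1, by lia⟩
  obtain ⟨W, g, U, hW, hg, hU, hn⟩ :=
    exists_valuationSubring_residueField_le_ringKrullDim (f := (f : A →+* F)) hf hA
  let π : E →+* ResidueField W := ((residue W).comp g).comp (algebraMap E A)
  let : Algebra E (ResidueField W) := π.toAlgebra
  let k : Subfield (ResidueField W) := (algebraicClosure E (ResidueField W)).toSubfield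
  have hkU : k.toSubring ≤ U.toSubring := algebraicClosure_toSubring_le fun e => hU _
  have hk : k ≠ ⊤ := by
    rintro hk
    have hUtop : U = ⊤ := top_le_iff.1 fun x _ => hkU (show x ∈ k from hk ▸ trivial)
    have h0 : ringKrullDim (⊤ : ValuationSubring (ResidueField W)) = 0 :=
      (ringKrullDim_eq_of_ringEquiv Subring.topEquiv).trans (ringKrullDim_eq_zero_of_field _)
    rw [hUtop, h0] at hn
    have : n ≤ 0 := mod_cast hn
    lia
  have : IsIntegrallyClosedIn k.toSubring (ResidueField W) :=
    inferInstanceAs (IsIntegrallyClosedIn (integralClosure E (ResidueField W)) _)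
  have hgE (e : E) : (g (algebraMap E A e) : F) = algebraMap E F e := by
    rw [← f.commutes e]
    exact RingHom.congr_fun hg _
  refine ⟨residuePullback W k.toSubring, compositeValuationSubring W U,
    isLocalRing_residuePullback k, isFractionRing_residuePullback hW _,
    not_isEssential_residuePullback hW hk, fun e => ?_,
    fun _ => exists_valuationSubring_of_notMem_residuePullback,
    residuePullback_le_compositeValuationSubring hkU, ?_⟩
  · refine mem_residuePullback.2 ⟨hgE e ▸ (g _).2, ?_⟩
    have hge : (⟨algebraMap E F e, hgE e ▸ (g _).2⟩ : W) = g (algebraMap E A e) :=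
      Subtype.ext (hgE e).symm
    rw [hge]
    exact (algebraicClosure E (ResidueField W)).algebraMap_mem e
  · push_cast
    exact (add_le_add_left hn 1).trans (ringKrullDim_add_one_le_compositeValuationSubring hW U)

end Overrings

section AdjoinCompl

variable {k F ι σ : Type*} [Field k] [Field F] [Algebra k F] {X : σ → F} {e : ι → σ}

/-- The subfield of `F` generated over `k` by the `X s` with `s` outside the range of `e`. -/
abbrev adjoinCompl (k : Type*) {F ι σ : Type*} [Field k] [Field F] [Algebra k F] (X : σ → F)
    (e : ι → σ) : IntermediateField k F :=
  IntermediateField.adjoin k (X '' (Set.range e)ᶜ)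

theorem mem_adjoinCompl {s : σ} (hs : s ∉ Set.range e) : X s ∈ adjoinCompl k X e :=
  IntermediateField.subset_adjoin _ _ ⟨s, hs, rfl⟩

theorem algebraicIndependent_adjoinCompl (hX : AlgebraicIndependent k X)
    (he : Function.Injective e) : AlgebraicIndependent (adjoinCompl k X e) (X ∘ e) :=
  (IntermediateField.algebraicIndependent_adjoin_iff.2
    (hX.adjoin_of_disjoint (disjoint_compl_left (a := Set.range e)))).comp
    (Set.rangeFactorization e) fun _ _ h => he (congrArg Subtype.val h)

theorem adjoin_adjoinCompl (hgen : IntermediateField.adjoin k (Set.range X) = ⊤) :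
    IntermediateField.adjoin (adjoinCompl k X e) (Set.range (X ∘ e)) = ⊤ := by
  rw [← IntermediateField.restrictScalars_eq_top_iff (K := k),
    IntermediateField.adjoin_adjoin_left, ← top_le_iff, ← hgen]
  refine IntermediateField.adjoin.mono _ _ _ ?_
  rintro _ ⟨s, rfl⟩
  by_cases hs : s ∈ Set.range e
  · obtain ⟨i, rfl⟩ := hs
    exact .inr ⟨i, rfl⟩
  · exact .inl ⟨s, hs, rfl⟩

theorem exists_finite_mem_adjoin_image (hgen : IntermediateField.adjoin k (Set.range X) = ⊤)
    (f : F) : ∃ A : Set σ, A.Finite ∧ f ∈ IntermediateField.adjoin k (X '' A) := by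
  obtain ⟨T, hT, hf⟩ :=
    IntermediateField.exists_finset_of_mem_adjoin (hgen ▸ IntermediateField.mem_top : f ∈ _)
  rw [← Set.image_univ] at hT
  obtain ⟨A, -, hA⟩ := (Set.exists_subset_image_finite_and
    (p := fun T => f ∈ IntermediateField.adjoin k T)).1 ⟨T, hT, T.finite_toSet, hf⟩
  exact ⟨A, hA⟩

theorem trdeg_le_of_adjoin_range_eq_top {y : ι → F} [Finite ι]
    (hy : IntermediateField.adjoin k (Set.range y) = ⊤) : Algebra.trdeg k F ≤ Nat.card ι := by
  have : Algebra.IsAlgebraic (Algebra.adjoin k (Set.range y)) F := by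
    refine ⟨fun f => ?_⟩
    obtain ⟨a, ha, b, hb, rfl⟩ := IntermediateField.mem_adjoin_iff_div.1
      (hy ▸ IntermediateField.mem_top : f ∈ IntermediateField.adjoin k (Set.range y))
    have halg {c : F} (hc : c ∈ Algebra.adjoin k (Set.range y)) :=
      isAlgebraic_algebraMap (A := F) (⟨c, hc⟩ : Algebra.adjoin k (Set.range y))
    exact div_eq_mul_inv a b ▸ (halg ha).mul (halg hb).inv
  refine (Algebra.IsAlgebraic.trdeg_le_cardinalMk k (Set.range y) (A := F)).trans ?_
  rw [← Nat.cast_card]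
  exact_mod_cast Finite.card_range_le y

end AdjoinCompl

section Sequences

theorem exists_seq_forall_infinite {α : Type*} [Countable α] [Nonempty α] :
    ∃ g : ℕ → α, ∀ a, {i | g i = a}.Infinite := by
  obtain ⟨g, hg⟩ := exists_surjective_nat α
  refine ⟨fun i => g i.unpair.1, fun a => ?_⟩
  obtain ⟨m, rfl⟩ := hg a
  exact Set.infinite_of_injective_forall_mem (f := Nat.pair m)
    (fun _ _ h => (Nat.pair_eq_pair.1 h).2) fun j => by simp

theorem exists_seq_valuationSubring {F : Type*} [Field F] [Countable F] {R : Subring F}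
    {U₀ : ValuationSubring F} (hU₀ : R ≤ U₀.toSubring)
    (hR : ∀ x ∉ R, ∃ V : ValuationSubring F, R ≤ V.toSubring ∧ x ∉ V) :
    ∃ U : ℕ → ValuationSubring F, (∀ i, R ≤ (U i).toSubring) ∧ {i | U i = U₀}.Infinite ∧
      ∀ x ∉ R, {i | x ∉ U i}.Infinite := by
  choose V hRV hxV using fun x : {x // x ∉ R} => hR x x.2
  obtain ⟨g, hg⟩ := exists_seq_forall_infinite (α := Option {x // x ∉ R})
  refine ⟨fun i => (g i).elim U₀ V, fun i => show R ≤ ((g i).elim U₀ V).toSubring from ?_,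
    (hg none).mono ?_, fun x hx => (hg (some ⟨x, hx⟩)).mono ?_⟩
  · cases g i
    exacts [hU₀, hRV _]
  · intro i (hi : g i = none)
    simp [hi]
  · intro i (hi : g i = some ⟨x, hx⟩)
    simpa [hi] using hxV ⟨x, hx⟩

end Sequences

section Rows

variable {k F ι ν τ : Type*} [Field k] [Field F] [Algebra k F] {X : (ι × ν) ⊕ τ → F}

/-- The position of the `n`-th variable of the `i`-th row. -/
abbrev rowIndex (ν τ : Type*) {ι : Type*} (i : ι) (n : ν) : (ι × ν) ⊕ τ := .inl (i, n)

theorem rowIndex_injective (i : ι) : Function.Injective (rowIndex ν τ i) := fun _ _ h => by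
  simpa using h

theorem finite_notMem_adjoinCompl_rowIndex
    (hgen : IntermediateField.adjoin k (Set.range X) = ⊤) (f : F) :
    {i | f ∉ adjoinCompl k X (rowIndex ν τ i)}.Finite := by
  obtain ⟨A, hA, hf⟩ := exists_finite_mem_adjoin_image hgen f
  have hrow : {i | ∃ n, rowIndex ν τ i n ∈ A}.Finite :=
    ((hA.preimage Sum.inl_injective.injOn).image Prod.fst).subset
      fun i ⟨n, hn⟩ => ⟨(i, n), hn, rfl⟩
  refine hrow.subset fun i hi => ?_
  by_contra hiA
  refine hi (IntermediateField.adjoin.mono k _ _ (Set.image_mono ?_) hf)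
  rintro _ hs ⟨n, rfl⟩
  exact hiA ⟨n, hs⟩

theorem mem_adjoinCompl_rowIndex {i j : ι} (hij : i ≠ j) (n : ν) :
    X (rowIndex ν τ i n) ∈ adjoinCompl k X (rowIndex ν τ j) :=
  mem_adjoinCompl fun ⟨_, h⟩ => hij (congrArg Prod.fst (Sum.inl_injective h)).symm

/-- The `n`-th variable of the row gets the value of the `n`-th element of the countable field
generated by the other variables, so that the row realises all values. -/
theorem exists_valuationSubring_rowIndex [Countable F] {X : (ι × ℕ) ⊕ τ → F}
    (hX : AlgebraicIndependent k X) (hgen : IntermediateField.adjoin k (Set.range X) = ⊤)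
    (U : ValuationSubring F) (i : ι) :
    ∃ V : ValuationSubring F,
      V.comap (algebraMap (adjoinCompl k X (rowIndex ℕ τ i)) F) =
        U.comap (algebraMap (adjoinCompl k X (rowIndex ℕ τ i)) F) ∧
      (∀ f ≠ 0, ∃ n, V.valuation (X (rowIndex ℕ τ i n)) = V.valuation f) ∧
      ringKrullDim V =
        ringKrullDim (U.comap (algebraMap (adjoinCompl k X (rowIndex ℕ τ i)) F)) := by
  have : Countable (adjoinCompl k X (rowIndex ℕ τ i))ˣ := Units.val_injective.countable
  obtain ⟨c, hc⟩ := exists_surjective_nat (adjoinCompl k X (rowIndex ℕ τ i))ˣ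
  obtain ⟨V, hVU, hVX, hVK⟩ := exists_gaussExtension_valuation_eq
    (algebraicIndependent_adjoinCompl hX (rowIndex_injective i)) (adjoin_adjoinCompl hgen)
    (U.comap (algebraMap _ F)) c
  refine ⟨V, hVU, fun f hf => ?_, hVU ▸
    (ringKrullDim_le_comap _ hVK).antisymm (ringKrullDim_comap_le _ V)⟩
  obtain ⟨a, ha⟩ := hVK f
  have ha0 : a ≠ 0 := by
    rintro rfl
    exact hf (by simpa using ha.symm)
  obtain ⟨n, hn⟩ := hc (.mk0 a ha0)
  exact ⟨n, (hVX n).trans (by rw [hn, Units.val_mk0, ha])⟩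

theorem X_add_X_ne_zero {σ : Type*} {X : σ → F} (hX : AlgebraicIndependent k X) {s t : σ}
    (hst : s ≠ t) : X s + X t ≠ 0 := by
  classical
  intro h
  have hp : (MvPolynomial.X s + MvPolynomial.X t : MvPolynomial σ k) = 0 :=
    hX (by simpa using h)
  simpa [hst.symm] using congrArg (MvPolynomial.eval (Pi.single s 1)) hp

theorem isSeparatedSystem_rowIndex (hX : AlgebraicIndependent k X)
    (hgen : IntermediateField.adjoin k (Set.range X) = ⊤) {R : Subring F}
    {U V : ι → ValuationSubring F} (hE : ∀ a ∈ adjoinCompl k X Sum.inr, a ∈ R)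
    (hRU : ∀ i, R ≤ (U i).toSubring) (hinf : ∀ x ∉ R, {i | x ∉ U i}.Infinite)
    (hVU : ∀ i, ∀ a ∈ adjoinCompl k X (rowIndex ν τ i), a ∈ V i ↔ a ∈ U i)
    (hV : ∀ i, ∀ f ≠ 0, ∃ n, (V i).valuation (X (rowIndex ν τ i n)) = (V i).valuation f) :
    IsSeparatedSystem R V fun i => Set.range (X ∘ rowIndex ν τ i) := by
  have hXE (i : ι) (n : ν) : X (rowIndex ν τ i n) ∈ adjoinCompl k X Sum.inr :=
    mem_adjoinCompl (by simp)
  have hone {m : ι} {x : F} (hx0 : x ≠ 0) (hxE : x ∈ adjoinCompl k X Sum.inr)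
      (hxm : x ∈ adjoinCompl k X (rowIndex ν τ m)) : (V m).valuation x = 1 :=
    valuation_eq_one_of_inv_mem hx0 ((hVU m _ hxm).2 (hRU m (hE _ hxE)))
      ((hVU m _ (inv_mem hxm)).2 (hRU m (hE _ (inv_mem hxE))))
  have hfin := finite_notMem_adjoinCompl_rowIndex hgen
  constructor
  case iInf_le =>
    intro x hx
    by_contra hxR
    obtain ⟨i, hxi, hi⟩ := ((hinf x hxR).sdiff (hfin x)).nonempty
    exact hxi ((hVU i x (not_not.1 hi)).1 (Subring.mem_iInf.1 hx i))
  case finite_notMem =>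
    exact fun h hR => (hfin h).subset fun i hi hiK => hi ((hVU i h hiK).2 (hRU i hR))
  case ne_zero =>
    rintro i _ ⟨n, rfl⟩
    exact hX.ne_zero _
  case mem =>
    rintro i _ ⟨n, rfl⟩
    exact hE _ (hXE i n)
  case inv_mem =>
    rintro i _ ⟨n, rfl⟩
    exact hE _ (inv_mem (hXE i n))
  case exists_valuation_eq =>
    intro i f hf
    obtain ⟨n, hn⟩ := hV i f hf
    exact ⟨_, ⟨n, rfl⟩, hn⟩
  case valuation_eq_one =>
    rintro i m him _ ⟨n, rfl⟩
    exact hone (hX.ne_zero _) (hXE i n) (mem_adjoinCompl_rowIndex him n)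
  case valuation_add_eq_one =>
    rintro i j m hij him hjm _ ⟨n, rfl⟩ _ ⟨l, rfl⟩
    exact hone (X_add_X_ne_zero hX (by simp [hij])) (add_mem (hXE i n) (hXE j l))
      (add_mem (mem_adjoinCompl_rowIndex him n) (mem_adjoinCompl_rowIndex hjm l))

end Rows

section Construction

universe u v

theorem exists_countable_algebraicIndependent (k : Type u) (σ : Type v) [Field k] [Countable k]
    [Countable σ] :
    ∃ (F : Type (max u v)) (_ : Field F) (_ : Algebra k F) (X : σ → F),
      Countable F ∧ AlgebraicIndependent k X ∧ IntermediateField.adjoin k (Set.range X) = ⊤ := by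
  let P := MvPolynomial σ k
  have haeval (p : P) : MvPolynomial.aeval (fun s => algebraMap P (FractionRing P) (.X s)) p =
      algebraMap P (FractionRing P) p :=
    (MvPolynomial.aeval_algebraMap_apply _ _ p).trans (by rw [MvPolynomial.aeval_X_left_apply])
  refine ⟨FractionRing P, inferInstance, inferInstance, fun s => algebraMap P _ (.X s), ?_,
    fun p q h => ?_, top_le_iff.1 fun z _ => ?_⟩
  · rw [← Cardinal.mk_le_aleph0_iff]
    refine (Localization.cardinalMk_le _).trans
      ((MvPolynomial.cardinalMk_le_max_lift (σ := σ) (R := k)).trans ?_)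
    simp
  · exact IsFractionRing.injective P (FractionRing P) (by rwa [haeval, haeval] at h)
  · obtain ⟨a, b, -, rfl⟩ := IsFractionRing.div_surjective P z
    exact (IntermediateField.mem_adjoin_range_iff _ _ _).2 ⟨a, b, by rw [haeval, haeval]⟩

variable {k F : Type*} [Field k] [Field F] [Algebra k F] [Countable F] {r : ℕ}
  {X : (ℕ × ℕ) ⊕ Fin r → F}

theorem exists_isSeparatedSystem (hX : AlgebraicIndependent k X)
    (hgen : IntermediateField.adjoin k (Set.range X) = ⊤) (hr : 2 ≤ r) :
    ∃ (R : Subring F) (V : ℕ → ValuationSubring F) (Y : ℕ → Set F),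
      IsSeparatedSystem R V Y ∧ IsLocalRing R ∧ IsFractionRing R F ∧ ¬ IsEssential R ∧
      (∃ i, r ≤ ringKrullDim (V i)) ∧ (∀ i, ringKrullDim (V i) ≤ r) ∧
      ∀ U : ValuationSubring F, R ≤ U.toSubring → ringKrullDim U ≤ r := by
  obtain ⟨R, U₀, hloc, hfrac, hess, hER, hR, hRU₀, hrU₀⟩ := exists_isLocalRing_not_isEssential
    (algebraicIndependent_adjoinCompl hX Sum.inr_injective) hr (by simp)
  have hdim (U : ValuationSubring F) (hU : R ≤ U.toSubring) : ringKrullDim U ≤ r :=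
    ringKrullDim_le_of_algebraMap_mem
      (by simpa using trdeg_le_of_adjoin_range_eq_top (adjoin_adjoinCompl (e := Sum.inr) hgen))
      fun e => hU (hER e)
  obtain ⟨U, hRU, hU₀, hinf⟩ := exists_seq_valuationSubring hRU₀ hR
  choose V hVU hVX hdimV using fun i => exists_valuationSubring_rowIndex hX hgen (U i) i
  have hVU' (i : ℕ) (a : F) (ha : a ∈ adjoinCompl k X (rowIndex ℕ (Fin r) i)) :
      a ∈ V i ↔ a ∈ U i :=
    SetLike.ext_iff.1 (hVU i) ⟨a, ha⟩
  refine ⟨R, V, _, isSeparatedSystem_rowIndex hX hgen (fun a ha => hER ⟨a, ha⟩) hRU hinf hVU' hVX,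
    hloc, hfrac, hess, ?_, fun i => ?_, hdim⟩
  · obtain ⟨s, hs, hsU₀⟩ := exists_finite_le_ringKrullDim_comap hrU₀
    have hsfin : {i | ¬ s ⊆ adjoinCompl k X (rowIndex ℕ (Fin r) i)}.Finite :=
      (hs.biUnion fun f _ => finite_notMem_adjoinCompl_rowIndex hgen f).subset fun i hi => by
        simpa [Set.not_subset] using hi
    obtain ⟨i, rfl, hi⟩ := (hU₀.sdiff hsfin).nonempty
    exact ⟨i, hdimV i ▸ hsU₀ _ fun f hf => ⟨⟨f, not_not.1 hi hf⟩, rfl⟩⟩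
  · exact hdimV i ▸ (ringKrullDim_comap_le _ (U i)).trans (hdim _ (hRU i))

end Construction

end EssentialJaffard

open EssentialJaffard in
/-- For every integer `r ≥ 2` there exists an integral domain `D` which
is essential, satisfies `dim(D) = dim_v(D) = r` (hence is an `r`-dimensional Jaffard
domain), but is not locally essential: some localization `D_q` at a prime `q` is not
essential. -/
theorem exists_essential_jaffard_not_locallyEssential (r : ℕ) (hr : 2 ≤ r) :
    ∃ (D : Type) (_ : CommRing D) (_ : IsDomain D),
      IsEssential D ∧
      ringKrullDim D = (r : WithBot ℕ∞) ∧
      valuativeDim D = (r : WithBot ℕ∞) ∧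
      ∃ (q : Ideal D) (hq : q.IsPrime),
        haveI := hq
        ¬ IsEssential (Localization.AtPrime q) := by
  obtain ⟨F, _, _, X, _, hX, hgen⟩ := exists_countable_algebraicIndependent ℚ ((ℕ × ℕ) ⊕ Fin r)
  obtain ⟨R, V, Y, hV, _, _, hR, ⟨i, hi⟩, hVr, hRr⟩ := exists_isSeparatedSystem hX hgen hr
  let D : Subring F := ⨅ i, (V i).toSubring
  have : IsFractionRing D F := hV.hasUnitDenominators.isFractionRing
  have hdim : r ≤ ringKrullDim D := hi.trans <|
    have : IsLocalRing (V i).toSubring := inferInstanceAs (IsLocalRing (V i))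
    ringKrullDim_le_of_hasUnitDenominators (iInf_le _ i) (hV.hasUnitDenominators_valuationSubring i)
  have hval : valuativeDim D ≤ r := valuativeDim_le (K := F) fun U hU => by
    obtain hRU | ⟨j, hj⟩ := hV.le_or_exists_le fun a ha => hU ⟨a, ha⟩
    exacts [hRr U hRU, (ringKrullDim_le_of_le hj).trans (hVr j)]
  have hle := ringKrullDim_le_valuativeDim D
  refine ⟨D, inferInstance, inferInstance, hV.isEssential, (hle.trans hval).antisymm hdim,
    hval.antisymm (hdim.trans hle), center hV.iInf_le, inferInstance, fun h => hR ?_⟩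
  obtain ⟨e⟩ := nonempty_localization_center_ringEquiv hV.iInf_le hV.hasUnitDenominators
  exact isEssential_of_ringEquiv e h
end
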